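/- arXiv:0710.1283 — 4 statements merged into one kernel-verified Lean document; each statement's English description precedes it below -/
import Mathlib

section
/- There is an absolute constant C > 0 such that if two bi-infinite sequences α̂_1 = (a'_m)_{m∈ℤ} and α̂_2 = (a''_m)_{m∈ℤ} of positive integers satisfy a'_m = a''_m for all −n ≤ m ≤ n, then | f(α̂_1) − f(α̂_2) | ≤ C·2^{−n}, where f is the uniform limit of the functions f_n. -/
open MeasureTheory Filter Set Topology

noncomputable section

/-- The Gauss map `x ↦ {1/x}`. -/
def gaussMap (x : ℝ) : ℝ := Int.fract (1 / x)

/-- The `n`-th partial quotient (1-indexed) of the continued fraction expansion of `α`: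
`pq α n = ⌊1 / 𝒢^{n-1} α⌋`. -/
def pq (α : ℝ) (n : ℕ) : ℕ := ⌊1 / gaussMap^[n - 1] α⌋₊

/-- Denominators of the convergents attached to a (1-indexed) sequence of partial quotients:
`q 0 = 1`, `q 1 = b 1`, `q (n+2) = b (n+2) * q (n+1) + q n`. -/
def qden (b : ℕ → ℕ) : ℕ → ℕ
  | 0 => 1
  | 1 => b 1
  | n + 2 => b (n + 2) * qden b (n + 1) + qden b n

/-- Numerators of the convergents attached to a (1-indexed) sequence of partial quotients:
`p 0 = 0`, `p 1 = 1`, `p (n+2) = b (n+2) * p (n+1) + p n`. -/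
def pnum (b : ℕ → ℕ) : ℕ → ℕ
  | 0 => 0
  | 1 => 1
  | n + 2 => b (n + 2) * pnum b (n + 1) + pnum b n

/-- `n_R(α)`: the first index `n` with `q_n(α) > R`. -/
def nIndex (α : ℝ) (R : ℝ) : ℕ := sInf {n : ℕ | R < (qden (pq α) n : ℝ)}

/-- The Gauss measure on `(0,1)`, with density `1 / (ln 2 · (1 + x))`. -/
def gaussMeasure : Measure ℝ :=
  (volume.restrict (Ioo (0 : ℝ) 1)).withDensity fun x =>
    ENNReal.ofReal (1 / (Real.log 2 * (1 + x)))

/-- The domain `D = ((0,1) ∖ ℚ) × ((0,1) ∖ ℚ)` of the natural extension of the Gauss map. -/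
def Dset : Set (ℝ × ℝ) :=
  {p | p.1 ∈ Ioo (0 : ℝ) 1 ∧ Irrational p.1 ∧ p.2 ∈ Ioo (0 : ℝ) 1 ∧ Irrational p.2}

/-- The invariant measure `μ₂` on `D`, with density `1 / (ln 2 · (1 + x y)²)`. -/
def mu2 : Measure (ℝ × ℝ) :=
  (volume.restrict Dset).withDensity fun p =>
    ENNReal.ofReal (1 / (Real.log 2 * (1 + p.1 * p.2) ^ 2))

/-- The roof function `φ(x, y) = ln (⌊1/y⌋ + x)`. -/
def roof (p : ℝ × ℝ) : ℝ := Real.log ((⌊1 / p.2⌋ : ℝ) + p.1)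

/-- The natural extension of the Gauss map,
`Ĝ(x, y) = (1 / (⌊1/y⌋ + x), 1/y − ⌊1/y⌋)`. -/
def GhatMap (p : ℝ × ℝ) : ℝ × ℝ := (1 / ((⌊1 / p.2⌋ : ℝ) + p.1), Int.fract (1 / p.2))

/-- Birkhoff sums `S_r φ(p) = ∑_{i<r} φ(Ĝ^i p)` of the roof function under `Ĝ`. -/
def birk (p : ℝ × ℝ) (r : ℕ) : ℝ := ∑ i ∈ Finset.range r, roof (GhatMap^[i] p)

/-- `r(p, T)`: the first `r` with `S_r φ(p) > T`. -/
def rTime (p : ℝ × ℝ) (T : ℝ) : ℕ := sInf {r : ℕ | T < birk p r}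

/-- Value of a finite continued fraction `[b₁, b₂, …, bₘ] = 1/(b₁ + 1/(b₂ + ⋯ + 1/bₘ))`,
entries given as a list. -/
def cfList : List ℝ → ℝ
  | [] => 0
  | b :: t => 1 / (b + cfList t)

/-- The `m`-th truncation `[b 1, b 2, …, b m]` of an infinite continued fraction. -/
def cfTrunc (b : ℕ → ℝ) (m : ℕ) : ℝ := cfList ((List.range m).map fun i => b (i + 1))

/-- Value of the infinite continued fraction `[b 1, b 2, …]`, i.e. the limit of its finite
truncations. -/
def cfVal (b : ℕ → ℝ) : ℝ := limUnder atTop fun m => cfTrunc b m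

/-- The finite continued fraction on the reversed word,
`cfRev b k = [b k; b (k-1), …, b 1] = b k + 1/(b (k-1) + ⋯ + 1/(b 1))`. -/
def cfRev (b : ℕ → ℝ) (k : ℕ) : ℝ :=
  b k + cfList ((List.range (k - 1)).map fun i => b (k - 1 - i))

/-- For a bi-infinite sequence `a : ℤ → ℕ` of partial quotients,
`fn a n = ln q_n − ∑_{k=1}^n ln [a_k; a_{k-1}, a_{k-2}, …]`. -/
def fn (a : ℤ → ℕ) (n : ℕ) : ℝ :=
  Real.log (qden (fun k => a (k : ℤ)) n : ℝ) -
    ∑ k ∈ Finset.Icc 1 n,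
      Real.log ((a (k : ℤ) : ℝ) + cfVal fun j => (a ((k : ℤ) - (j : ℤ)) : ℝ))

/-- The bi-sided cylinder of length `n` in `D` prescribing the sequence coordinates
`a_k = b k` for `−n ≤ k ≤ n` (where `a_k`, `k ≥ 1`, are the partial quotients of the second
coordinate and `a_{−j}`, `j ≥ 0`, are the partial quotients of the first coordinate). -/
def cylinder (n : ℕ) (b : ℤ → ℕ) : Set (ℝ × ℝ) :=
  {p ∈ Dset | (∀ k : ℕ, 1 ≤ k → k ≤ n → pq p.2 k = b (k : ℤ)) ∧
    ∀ j : ℕ, j ≤ n → pq p.1 (j + 1) = b (-(j : ℤ))}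

/-- The phase space of the special flow over `Ĝ` with roof function `φ`. -/
def DPhi : Set ((ℝ × ℝ) × ℝ) := {q | q.1 ∈ Dset ∧ 0 ≤ q.2 ∧ q.2 < roof q.1}

/-- The invariant probability measure `μ₃` of the special flow. -/
def mu3 : Measure ((ℝ × ℝ) × ℝ) :=
  (ENNReal.ofReal (∫ p, roof p ∂mu2))⁻¹ • ((mu2.prod volume).restrict DPhi)

/-- The special flow `Φ_t` (for `t ≥ 0`) built over `Ĝ` with roof function `φ`:
`Φ_t(p, s) = (Ĝ^{r-1} p, s + t − S_{r-1} φ(p))` where `r = r(p, s + t)`. -/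
def flowMap (t : ℝ) (q : (ℝ × ℝ) × ℝ) : (ℝ × ℝ) × ℝ :=
  (GhatMap^[rTime q.1 (q.2 + t) - 1] q.1,
    q.2 + t - birk q.1 (rTime q.1 (q.2 + t) - 1))

end

lemma cfTrunc_zero (b : ℕ → ℝ) : cfTrunc b 0 = 0 := by simp [cfTrunc, cfList]

lemma cfTrunc_succ (b : ℕ → ℝ) (m : ℕ) :
    cfTrunc b (m + 1) = 1 / (b 1 + cfTrunc (fun j => b (j + 1)) m) := by
  simp [cfTrunc, List.range_succ_eq_map, cfList, Function.comp_def]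

lemma cfTrunc_mem (m : ℕ) : ∀ (b : ℕ → ℝ), (∀ i, 1 ≤ i → 1 ≤ b i) →
    0 ≤ cfTrunc b m ∧ cfTrunc b m ≤ 1 := by
  induction m with
  | zero => intro b _; simp [cfTrunc_zero]
  | succ m ih =>
    intro b hb
    have h := ih (fun j => b (j + 1)) (fun i _ => hb _ (by omega))
    have h1 := hb 1 le_rfl
    rw [cfTrunc_succ]
    refine ⟨by apply div_nonneg <;> linarith, ?_⟩
    rw [div_le_one (by linarith)]
    linarith

lemma two_step (a b u v : ℝ) (ha : 1 ≤ a) (hb : 1 ≤ b) (hu : 0 ≤ u) (hv : 0 ≤ v) :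
    |1 / (a + 1 / (b + u)) - 1 / (a + 1 / (b + v))| ≤ |u - v| / 4 := by
  have e : 1 / (a + 1 / (b + u)) - 1 / (a + 1 / (b + v))
      = (u - v) / ((a * (b + u) + 1) * (a * (b + v) + 1)) := by
    have h1 : b + u ≠ 0 := by positivity
    have h2 : b + v ≠ 0 := by positivity
    have h3 : a * (b + u) + 1 ≠ 0 := by positivity
    have h4 : a * (b + v) + 1 ≠ 0 := by positivity
    have e1 : 1 / (a + 1 / (b + u)) = (b + u) / (a * (b + u) + 1) := by
      field_simp
    have e2 : 1 / (a + 1 / (b + v)) = (b + v) / (a * (b + v) + 1) := by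
      field_simp
    rw [e1, e2, div_sub_div _ _ h3 h4]
    congr 1
    ring
  have h3 : 2 ≤ a * (b + u) + 1 := by nlinarith
  have h4 : 2 ≤ a * (b + v) + 1 := by nlinarith
  have h5 : 4 ≤ (a * (b + u) + 1) * (a * (b + v) + 1) := by nlinarith
  rw [e, abs_div, abs_of_pos (show 0 < (a * (b + u) + 1) * (a * (b + v) + 1) by linarith)]
  exact div_le_div_of_nonneg_left (abs_nonneg _) (by norm_num) h5

lemma cfTrunc_close : ∀ (n : ℕ) (b b' : ℕ → ℝ) (M M' : ℕ), (∀ i, 1 ≤ i → 1 ≤ b i) →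
    (∀ i, 1 ≤ i → 1 ≤ b' i) → (∀ i, 1 ≤ i → i ≤ n → b i = b' i) → n ≤ M → n ≤ M' →
    |cfTrunc b M - cfTrunc b' M'| ≤ 2 * (1 / 2 : ℝ) ^ n
  | 0, b, b', M, M', hb, hb', _, _, _ => by
    have h := cfTrunc_mem M b hb
    have h' := cfTrunc_mem M' b' hb'
    rw [abs_le]; constructor <;> norm_num <;> linarith
  | 1, b, b', M, M', hb, hb', _, _, _ => by
    have h := cfTrunc_mem M b hb
    have h' := cfTrunc_mem M' b' hb'
    rw [abs_le]; constructor <;> norm_num <;> linarith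
  | n + 2, b, b', M, M', hb, hb', hbb, hM, hM' => by
    obtain ⟨M, rfl⟩ : ∃ k, M = k + 2 := ⟨M - 2, by omega⟩
    obtain ⟨M', rfl⟩ : ∃ k, M' = k + 2 := ⟨M' - 2, by omega⟩
    have ih := cfTrunc_close n (fun j => b (j + 1 + 1)) (fun j => b' (j + 1 + 1)) M M'
      (fun i _ => hb _ (by omega)) (fun i _ => hb' _ (by omega))
      (fun i _ _ => hbb _ (by omega) (by omega)) (by omega) (by omega)
    have h := cfTrunc_mem M (fun j => b (j + 1 + 1)) (fun i _ => hb _ (by omega))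
    have h' := cfTrunc_mem M' (fun j => b' (j + 1 + 1)) (fun i _ => hb' _ (by omega))
    rw [cfTrunc_succ, cfTrunc_succ, cfTrunc_succ, cfTrunc_succ,
      ← hbb 1 (by omega) (by omega), ← hbb (1 + 1) (by omega) (by omega)]
    refine (two_step _ _ _ _ (hb _ (by omega)) (hb _ (by omega)) h.1 h'.1).trans ?_
    rw [pow_add]
    linarith

lemma cfVal_tendsto (b : ℕ → ℝ) (hb : ∀ i, 1 ≤ i → 1 ≤ b i) :
    Filter.Tendsto (fun m => cfTrunc b m) Filter.atTop (nhds (cfVal b)) := by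
  have hc : CauchySeq (fun m => cfTrunc b m) := by
    refine cauchySeq_of_le_tendsto_0 (fun n => 2 * (1 / 2 : ℝ) ^ n) ?_ ?_
    · intro n m N h1 h2
      rw [Real.dist_eq]
      exact cfTrunc_close N b b n m hb hb (fun _ _ _ => rfl) h1 h2
    · have := (tendsto_pow_atTop_nhds_zero_of_lt_one (r := (1 / 2 : ℝ))
        (by norm_num) (by norm_num)).const_mul 2
      simpa using this
  exact hc.tendsto_limUnder

lemma cfVal_mem (b : ℕ → ℝ) (hb : ∀ i, 1 ≤ i → 1 ≤ b i) : 0 ≤ cfVal b ∧ cfVal b ≤ 1 :=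
  ⟨ge_of_tendsto' (cfVal_tendsto b hb) fun m => (cfTrunc_mem m b hb).1,
    le_of_tendsto' (cfVal_tendsto b hb) fun m => (cfTrunc_mem m b hb).2⟩

lemma cfVal_rec (b : ℕ → ℝ) (hb : ∀ i, 1 ≤ i → 1 ≤ b i) :
    cfVal b = 1 / (b 1 + cfVal (fun j => b (j + 1))) := by
  have hb' : ∀ i, 1 ≤ i → 1 ≤ (fun j => b (j + 1)) i := fun i _ => hb _ (by omega)
  have h1 := (cfVal_tendsto b hb).comp (Filter.tendsto_add_atTop_nat 1)
  have h2 := cfVal_tendsto _ hb'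
  have h0 := cfVal_mem _ hb'
  have h3 := hb 1 le_rfl
  have h4 := (tendsto_const_nhds (x := (1 : ℝ))).div (h2.const_add (b 1)) (by linarith)
  refine tendsto_nhds_unique h1 (h4.congr fun m => ?_)
  simp only [Function.comp]
  rw [cfTrunc_succ]
  rfl

lemma cfVal_close (n : ℕ) (b b' : ℕ → ℝ) (hb : ∀ i, 1 ≤ i → 1 ≤ b i)
    (hb' : ∀ i, 1 ≤ i → 1 ≤ b' i) (hbb : ∀ i, 1 ≤ i → i ≤ n → b i = b' i) :
    |cfVal b - cfVal b'| ≤ 2 * (1 / 2 : ℝ) ^ n := by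
  refine le_of_tendsto ((cfVal_tendsto b hb).sub (cfVal_tendsto b' hb')).abs ?_
  filter_upwards [Filter.eventually_ge_atTop n] with m hm
  exact cfTrunc_close n b b' m m hb hb' hbb hm hm

lemma qp_shift (b : ℕ → ℕ) : ∀ m : ℕ, pnum b (m + 1) = qden (fun j => b (j + 1)) m ∧
    qden b (m + 1) = b 1 * qden (fun j => b (j + 1)) m + pnum (fun j => b (j + 1)) m
  | 0 => by simp [pnum, qden]
  | 1 => by simp [pnum, qden, mul_comm]
  | m + 2 => by
    have h1 := qp_shift b m
    have h2 := qp_shift b (m + 1)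
    constructor
    · rw [pnum, h2.1, h1.1, qden]
    · rw [qden, h2.2, h1.2, qden, pnum]; ring

lemma qden_pos (b : ℕ → ℕ) (hb : ∀ i, 1 ≤ i → 1 ≤ b i) : ∀ m, 0 < qden b m
  | 0 => by simp [qden]
  | 1 => hb 1 le_rfl
  | m + 2 => by
    have := qden_pos b hb m
    rw [qden]; omega

lemma ratio_eq (m : ℕ) : ∀ (b : ℕ → ℕ), (∀ i, 1 ≤ i → 1 ≤ b i) →
    (pnum b m : ℝ) / qden b m = cfTrunc (fun j => (b j : ℝ)) m := by
  induction m with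
  | zero => intro b _; simp [pnum, cfTrunc_zero]
  | succ m ih =>
    intro b hb
    have hb' : ∀ i, 1 ≤ i → 1 ≤ (fun j => b (j + 1)) i := fun i _ => hb _ (by omega)
    have hq : (0 : ℝ) < qden (fun j => b (j + 1)) m := by exact_mod_cast qden_pos _ hb' m
    have hb1 : (1 : ℝ) ≤ b 1 := by exact_mod_cast hb 1 le_rfl
    rw [cfTrunc_succ, ← ih _ hb', (qp_shift b m).1, (qp_shift b m).2]
    push_cast
    have h5 : (0 : ℝ) ≤ pnum (fun j => b (j + 1)) m := by positivity
    field_simp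

/-- The forward denominators. -/
noncomputable def tk (a : ℤ → ℕ) (k : ℕ) : ℝ :=
  (a (k : ℤ) : ℝ) + cfVal fun j => (a ((k : ℤ) - (j : ℤ)) : ℝ)

lemma one_le_tk (a : ℤ → ℕ) (ha : ∀ m, 0 < a m) (k : ℕ) : 1 ≤ tk a k := by
  have h := (cfVal_mem (fun j => (a ((k : ℤ) - (j : ℤ)) : ℝ))
    (fun i _ => by exact_mod_cast ha _)).1
  have h2 : (1 : ℝ) ≤ a (k : ℤ) := by exact_mod_cast ha _
  unfold tk; linarith

lemma tk_succ (a : ℤ → ℕ) (ha : ∀ m, 0 < a m) (k : ℕ) :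
    tk a (k + 1) = a ((k + 1 : ℕ) : ℤ) + 1 / tk a k := by
  have h := cfVal_rec (fun j => (a (((k + 1 : ℕ) : ℤ) - (j : ℤ)) : ℝ))
    (fun i _ => by exact_mod_cast ha _)
  unfold tk
  rw [h]
  have e1 : ((k + 1 : ℕ) : ℤ) - ((1 : ℕ) : ℤ) = k := by push_cast; ring
  have e2 : ∀ j : ℕ, ((k + 1 : ℕ) : ℤ) - ((j + 1 : ℕ) : ℤ) = k - j := by
    intro j; push_cast; ring
  simp only [e1, e2]

/-- The backward tail. -/
noncomputable def xb (a : ℤ → ℕ) : ℝ := cfVal fun j => (a (1 - (j : ℤ)) : ℝ)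

noncomputable def QQ (a : ℤ → ℕ) (n : ℕ) : ℝ :=
  qden (fun k => a (k : ℤ)) n + xb a * pnum (fun k => a (k : ℤ)) n

lemma xb_mem (a : ℤ → ℕ) (ha : ∀ m, 0 < a m) : 0 ≤ xb a ∧ xb a ≤ 1 :=
  cfVal_mem _ (fun i _ => by exact_mod_cast ha _)

lemma QQ_pos (a : ℤ → ℕ) (ha : ∀ m, 0 < a m) (n : ℕ) : 0 < QQ a n := by
  have h1 : (0 : ℝ) < qden (fun k => a (k : ℤ)) n := by
    exact_mod_cast qden_pos _ (fun i _ => ha _) n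
  have h2 := (xb_mem a ha).1
  unfold QQ; positivity

lemma tk_QQ (a : ℤ → ℕ) (ha : ∀ m, 0 < a m) (n : ℕ) :
    tk a (n + 1) * QQ a n = QQ a (n + 1) := by
  induction n with
  | zero => simp [tk, QQ, xb, qden, pnum]
  | succ n ih =>
    have h := one_le_tk a ha (n + 1)
    have h0 : tk a (n + 1) ≠ 0 := by linarith
    rw [tk_succ a ha (n + 1), add_mul]
    have : 1 / tk a (n + 1) * QQ a (n + 1) = QQ a n := by
      rw [← ih]; field_simp
    rw [this]
    simp only [QQ, qden, pnum]
    push_cast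
    ring

lemma sum_log (a : ℤ → ℕ) (ha : ∀ m, 0 < a m) (n : ℕ) :
    ∑ k ∈ Finset.Icc 1 n, Real.log (tk a k) = Real.log (QQ a n) := by
  induction n with
  | zero => simp [QQ, qden, pnum]
  | succ n ih =>
    have h := one_le_tk a ha (n + 1)
    have h2 := QQ_pos a ha n
    rw [Finset.sum_Icc_succ_top (by omega), ih, ← tk_QQ a ha n,
      Real.log_mul (by linarith) (by linarith)]
    ring

lemma fn_eq (a : ℤ → ℕ) (ha : ∀ m, 0 < a m) (n : ℕ) :
    fn a n = - Real.log (1 + xb a * cfTrunc (fun j => (a (j : ℤ) : ℝ)) n) := by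
  have h1 : (0 : ℝ) < qden (fun k => a (k : ℤ)) n := by
    exact_mod_cast qden_pos _ (fun i _ => ha _) n
  have h : fn a n = Real.log (qden (fun k => a (k : ℤ)) n : ℝ) - Real.log (QQ a n) := by
    rw [← sum_log a ha n]; rfl
  have hr := ratio_eq n (fun k => a (k : ℤ)) (fun i _ => ha _)
  rw [h, ← hr, ← neg_sub, ← Real.log_div (QQ_pos a ha n).ne' h1.ne']
  congr 2
  unfold QQ
  field_simp

lemma log_lip (u v : ℝ) (hu : 1 ≤ u) (hv : 1 ≤ v) : Real.log u - Real.log v ≤ |u - v| := by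
  rw [← Real.log_div (by linarith) (by linarith)]
  refine (Real.log_le_sub_one_of_pos (by positivity)).trans ?_
  have : u / v - 1 = (u - v) / v := by field_simp
  rw [this]
  exact (div_le_div_of_nonneg_right (le_abs_self _) (by linarith)).trans
    (div_le_self (abs_nonneg _) hv)

lemma fn_close (n N : ℕ) (hN : n ≤ N) (a₁ a₂ : ℤ → ℕ) (h₁ : ∀ m : ℤ, 0 < a₁ m)
    (h₂ : ∀ m : ℤ, 0 < a₂ m)
    (h : ∀ m : ℤ, -(n : ℤ) ≤ m → m ≤ (n : ℤ) → a₁ m = a₂ m) :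
    |fn a₁ N - fn a₂ N| ≤ 4 * (1 / 2 : ℝ) ^ n := by
  rw [fn_eq a₁ h₁, fn_eq a₂ h₂]
  have hx : |xb a₁ - xb a₂| ≤ 2 * (1 / 2 : ℝ) ^ n :=
    cfVal_close n _ _ (fun i _ => by exact_mod_cast h₁ _) (fun i _ => by exact_mod_cast h₂ _)
      (fun i _ _ => by rw [h _ (by omega) (by omega)])
  have hy := cfTrunc_close n (fun j => (a₁ (j : ℤ) : ℝ)) (fun j => (a₂ (j : ℤ) : ℝ)) N N
      (fun i _ => by exact_mod_cast h₁ _) (fun i _ => by exact_mod_cast h₂ _)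
      (fun i _ _ => congrArg Nat.cast (h _ (by omega) (by omega))) hN hN
  have hy1 := cfTrunc_mem N (fun j => (a₁ (j : ℤ) : ℝ)) (fun i _ => by exact_mod_cast h₁ _)
  have hy2 := cfTrunc_mem N (fun j => (a₂ (j : ℤ) : ℝ)) (fun i _ => by exact_mod_cast h₂ _)
  have hx1 := xb_mem a₁ h₁
  have hx2 := xb_mem a₂ h₂
  generalize cfTrunc (fun j => (a₁ (j : ℤ) : ℝ)) N = y1 at *
  generalize cfTrunc (fun j => (a₂ (j : ℤ) : ℝ)) N = y2 at *
  generalize xb a₁ = x1 at *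
  generalize xb a₂ = x2 at *
  have k1 : 1 ≤ 1 + x1 * y1 := by nlinarith [mul_nonneg hx1.1 hy1.1]
  have k2 : 1 ≤ 1 + x2 * y2 := by nlinarith [mul_nonneg hx2.1 hy2.1]
  have key : |(1 + x1 * y1) - (1 + x2 * y2)| ≤ 4 * (1 / 2 : ℝ) ^ n := by
    have e : (1 + x1 * y1) - (1 + x2 * y2) = (x1 - x2) * y1 + x2 * (y1 - y2) := by ring
    rw [e]
    refine (abs_add_le _ _).trans ?_
    rw [abs_mul, abs_mul, abs_of_nonneg hy1.1, abs_of_nonneg hx2.1]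
    have := mul_le_of_le_one_right (abs_nonneg (x1 - x2)) hy1.2
    have := mul_le_of_le_one_left (abs_nonneg (y1 - y2)) hx2.2
    linarith
  have l1 := log_lip _ _ k1 k2
  have l2 := log_lip _ _ k2 k1
  rw [abs_sub_comm] at l2
  rw [abs_le]
  constructor <;> linarith

/-- If `f` is the (pointwise, hence uniform) limit of the functions `f_n`,
then there is an absolute constant `C > 0` such that whenever two bi-infinite sequences of
positive integers agree on all coordinates `−n ≤ m ≤ n`, `|f(α̂₁) − f(α̂₂)| ≤ C·2^{−n}`. -/
theorem statement8 (f : (ℤ → ℕ) → ℝ)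
    (hf : ∀ a : ℤ → ℕ, (∀ m : ℤ, 0 < a m) →
      Filter.Tendsto (fun n => fn a n) Filter.atTop (nhds (f a))) :
    ∃ C > (0 : ℝ), ∀ (n : ℕ) (a₁ a₂ : ℤ → ℕ), (∀ m : ℤ, 0 < a₁ m) → (∀ m : ℤ, 0 < a₂ m) →
      (∀ m : ℤ, -(n : ℤ) ≤ m → m ≤ (n : ℤ) → a₁ m = a₂ m) →
      |f a₁ - f a₂| ≤ C * (2 : ℝ) ^ (-(n : ℤ)) := by
  refine ⟨4, by norm_num, fun n a₁ a₂ h₁ h₂ h => ?_⟩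
  have e : (2 : ℝ) ^ (-(n : ℤ)) = (1 / 2 : ℝ) ^ n := by
    rw [zpow_neg, zpow_natCast, one_div, inv_pow]
  rw [e]
  refine le_of_tendsto ((hf a₁ h₁).sub (hf a₂ h₂)).abs ?_
  filter_upwards [Filter.eventually_ge_atTop n] with N hN
  exact fn_close n N hN a₁ a₂ h₁ h₂ h
end

section
/- Let ε > 0 and let C ⊆ D be a bi-sided cylinder of length n (fixing the sequence coordinates a_k for −n ≤ k ≤ n) such that | f(α̂) − f_C | ≤ ε/2 for every α̂ ∈ C, where f_C = sup_{α̂ ∈ C} f(α̂). Then there exists R_0 > 0 such that for every R ≥ R_0, setting T = ln R − f_C, the set U = { α̂ ∈ C : n_R(α̂) ≠ r(α̂, T) } satisfies μ2(U ∩ C) ≤ 7ε·μ2(C). -/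
open MeasureTheory Filter Set Topology

lemma g_step {y : ℝ} (h0 : y ∈ Ioo (0:ℝ) 1) (hi : Irrational y) :
    gaussMap y ∈ Ioo (0:ℝ) 1 ∧ Irrational (gaussMap y) ∧ 1 ≤ ⌊1 / y⌋₊ ∧
      ((⌊1/y⌋ : ℤ) : ℝ) = (⌊1 / y⌋₊ : ℝ) ∧ 1 / y = (⌊1 / y⌋₊ : ℝ) + gaussMap y := by
  obtain ⟨h0, h1⟩ := h0
  have hinv : 1 < 1 / y := by rw [lt_div_iff₀ h0]; linarith
  have hf : ((⌊1/y⌋ : ℤ) : ℝ) = (⌊1 / y⌋₊ : ℝ) := by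
    rw [← natCast_floor_eq_intCast_floor (by linarith)]
  have heq : 1 / y = (⌊1 / y⌋ : ℝ) + gaussMap y := (Int.floor_add_fract _).symm
  have hir : Irrational (1 / y) := by simpa using hi.inv
  have hgi : Irrational (gaussMap y) := by
    have : gaussMap y = 1 / y - (⌊1 / y⌋ : ℤ) := eq_sub_of_add_eq' heq.symm
    rw [this]
    exact hir.sub_intCast _
  refine ⟨⟨?_, Int.fract_lt_one _⟩, hgi, ?_, hf, ?_⟩
  · exact lt_of_le_of_ne (Int.fract_nonneg _) (fun h => hgi.ne_zero h.symm)
  · exact Nat.le_floor (by push_cast; linarith)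
  · rw [← hf]; exact heq

lemma g_iter {y : ℝ} (h0 : y ∈ Ioo (0:ℝ) 1) (hi : Irrational y) (k : ℕ) :
    gaussMap^[k] y ∈ Ioo (0:ℝ) 1 ∧ Irrational (gaussMap^[k] y) := by
  induction k with
  | zero => exact ⟨h0, hi⟩
  | succ k ih =>
    rw [Function.iterate_succ_apply']
    exact ⟨(g_step ih.1 ih.2).1, (g_step ih.1 ih.2).2.1⟩

lemma pq_pos {y : ℝ} (h0 : y ∈ Ioo (0:ℝ) 1) (hi : Irrational y) (k : ℕ) : 1 ≤ pq y k :=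
  (g_step (g_iter h0 hi (k-1)).1 (g_iter h0 hi (k-1)).2).2.2.1

lemma g_rel {y : ℝ} (h0 : y ∈ Ioo (0:ℝ) 1) (hi : Irrational y) (k : ℕ) :
    1 / gaussMap^[k] y = (pq y (k+1) : ℝ) + gaussMap^[k+1] y := by
  rw [Function.iterate_succ_apply']
  exact (g_step (g_iter h0 hi k).1 (g_iter h0 hi k).2).2.2.2.2

lemma qden_pos_s11 {b : ℕ → ℕ} (hb : ∀ k, 1 ≤ b k) (n : ℕ) : 1 ≤ qden b n ∧ n ≤ qden b n := by
  suffices h : (1 ≤ qden b n ∧ n ≤ qden b n) ∧ (1 ≤ qden b (n+1) ∧ n + 1 ≤ qden b (n+1)) from h.1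
  induction n with
  | zero => simp [qden, hb 1]
  | succ n ih =>
    refine ⟨ih.2, ?_⟩
    have h1 : qden b (n+1) ≤ b (n+2) * qden b (n+1) := Nat.le_mul_of_pos_left _ (hb _)
    have : qden b (n+1+1) = b (n+2) * qden b (n+1) + qden b n := rfl
    omega

lemma det_rel (b : ℕ → ℕ) (n : ℕ) :
    |(pnum b (n+1) : ℝ) * qden b n - pnum b n * qden b (n+1)| = 1 := by
  induction n with
  | zero => simp [pnum, qden]
  | succ n ih =>
    have h1 : qden b (n+1+1) = b (n+2) * qden b (n+1) + qden b n := rfl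
    have h2 : pnum b (n+1+1) = b (n+2) * pnum b (n+1) + pnum b n := rfl
    rw [h1, h2, ← ih, ← abs_neg]
    push_cast
    congr 1
    ring

lemma y_rel {y : ℝ} (h0 : y ∈ Ioo (0:ℝ) 1) (hi : Irrational y) (n : ℕ) :
    y * (qden (pq y) (n+1) + gaussMap^[n+1] y * qden (pq y) n) =
      pnum (pq y) (n+1) + gaussMap^[n+1] y * pnum (pq y) n := by
  induction n with
  | zero =>
    have := g_rel h0 hi 0
    have hy : y ≠ 0 := hi.ne_zero
    simp only [Function.iterate_zero, id_eq] at this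
    simp only [qden, pnum]
    push_cast
    simp only [mul_one, mul_zero, add_zero, zero_add] at this ⊢
    rw [← this]
    field_simp
  | succ n ih =>
    have := g_rel h0 hi (n+1)
    have hz := (g_iter h0 hi (n+1)).2.ne_zero
    have h1 : qden (pq y) (n+1+1) = pq y (n+2) * qden (pq y) (n+1) + qden (pq y) n := rfl
    have h2 : pnum (pq y) (n+1+1) = pq y (n+2) * pnum (pq y) (n+1) + pnum (pq y) n := rfl
    rw [h1, h2]
    push_cast
    set z := gaussMap^[n+1] y
    set w := gaussMap^[n+1+1] y
    have hw : w = 1 / z - pq y (n+1+1) := by rw [this]; ring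
    rw [hw]
    show _ = ((pq y (n+1+1) : ℝ)) * _ + _ + _
    apply mul_left_cancel₀ hz
    field_simp
    linear_combination ih

lemma approx {y : ℝ} (h0 : y ∈ Ioo (0:ℝ) 1) (hi : Irrational y) (n : ℕ) :
    |y - pnum (pq y) n / qden (pq y) n| ≤ 1 / (qden (pq y) n : ℝ)^2 := by
  cases n with
  | zero =>
    simp only [qden, pnum]
    norm_num
    rw [abs_le]; constructor <;> linarith [h0.1, h0.2]
  | succ n =>
    have h := y_rel h0 hi n
    have hd := det_rel (pq y) n
    have hq : (1:ℝ) ≤ qden (pq y) (n+1) := by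
      exact_mod_cast (qden_pos_s11 (pq_pos h0 hi) (n+1)).1
    have hq' : (1:ℝ) ≤ qden (pq y) n := by
      exact_mod_cast (qden_pos_s11 (pq_pos h0 hi) n).1
    obtain ⟨z0, z1⟩ := (g_iter h0 hi (n+1)).1
    set z := gaussMap^[n+1] y
    set q : ℝ := ((qden (pq y) (n+1) : ℕ) : ℝ)
    set q' : ℝ := ((qden (pq y) n : ℕ) : ℝ)
    set r : ℝ := ((pnum (pq y) (n+1) : ℕ) : ℝ)
    set r' : ℝ := ((pnum (pq y) n : ℕ) : ℝ)
    have hpos : 0 < q + z * q' := by positivity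
    have : y - r / q = - (z * (r * q' - r' * q)) / (q * (q + z * q')) := by
      field_simp
      linear_combination q * h
    rw [this, abs_div, abs_neg, abs_mul, hd, abs_of_pos z0, abs_of_pos (by positivity)]
    have hz : 0 ≤ q * (z * q') := by positivity
    apply div_le_div₀ zero_le_one (by linarith) (by positivity)
    nlinarith

/-- The Birkhoff sum in closed form. -/
lemma birk_eq {p : ℝ × ℝ} (hp : p ∈ Dset) (n : ℕ) :
    birk p n = Real.log (qden (pq p.2) n + p.1 * pnum (pq p.2) n) := by
  obtain ⟨hx, -, hy, hyi⟩ := hp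
  have hpos : ∀ n, 0 < (qden (pq p.2) n : ℝ) + p.1 * pnum (pq p.2) n := by
    intro n
    have hq : (1:ℝ) ≤ qden (pq p.2) n := by
      exact_mod_cast (qden_pos_s11 (pq_pos hy hyi) n).1
    have := mul_nonneg hx.1.le (Nat.cast_nonneg (α := ℝ) (pnum (pq p.2) n))
    linarith
  have h2 : ∀ n, (GhatMap^[n] p).2 = gaussMap^[n] p.2 := by
    intro n
    induction n with
    | zero => rfl
    | succ n ih =>
      rw [Function.iterate_succ_apply', Function.iterate_succ_apply', ← ih]; rfl
  have hfl : ∀ n, ((⌊1 / (GhatMap^[n] p).2⌋ : ℤ) : ℝ) = pq p.2 (n+1) := by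
    intro n
    rw [h2]
    exact (g_step (g_iter hy hyi n).1 (g_iter hy hyi n).2).2.2.2.1
  have h1 : ∀ n, (pq p.2 (n+1) : ℝ) + (GhatMap^[n] p).1 =
      (qden (pq p.2) (n+1) + p.1 * pnum (pq p.2) (n+1)) /
        (qden (pq p.2) n + p.1 * pnum (pq p.2) n) := by
    intro n
    induction n with
    | zero => simp [qden, pnum]
    | succ n ih =>
      have hs : (GhatMap^[n+1] p).1 = 1 / ((pq p.2 (n+1) : ℝ) + (GhatMap^[n] p).1) := by
        rw [Function.iterate_succ_apply', ← hfl]; rfl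
      have e1 : qden (pq p.2) (n+1+1)
        = pq p.2 (n+1+1) * qden (pq p.2) (n+1) + qden (pq p.2) n := rfl
      have e2 : pnum (pq p.2) (n+1+1)
        = pq p.2 (n+1+1) * pnum (pq p.2) (n+1) + pnum (pq p.2) n := rfl
      rw [hs, ih, e1, e2]
      have := (hpos n).ne'
      have := (hpos (n+1)).ne'
      push_cast
      field_simp
      ring
  induction n with
  | zero => simp [birk, qden, pnum]
  | succ n ih =>
    have : birk p (n+1) = birk p n + roof (GhatMap^[n] p) := Finset.sum_range_succ _ _
    rw [this, ih, roof, hfl, h1, Real.log_div (hpos _).ne' (hpos _).ne']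
    ring

lemma log_one_add_sub {u v : ℝ} (hu : 0 ≤ u) (hv : 0 ≤ v) :
    |Real.log (1 + u) - Real.log (1 + v)| ≤ |u - v| := by
  have key : ∀ u v : ℝ, 0 ≤ u → 0 ≤ v → Real.log (1 + u) - Real.log (1 + v) ≤ |u - v| := by
    intro u v hu hv
    rw [← Real.log_div (by linarith) (by linarith)]
    have h := Real.log_le_sub_one_of_pos (x := (1+u)/(1+v)) (by positivity)
    have : (1+u)/(1+v) - 1 = (u - v)/(1+v) := by field_simp; ring
    rw [this] at h
    refine h.trans ((div_le_div_of_nonneg_right (le_abs_self _) (by linarith)).trans ?_)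
    exact div_le_self (abs_nonneg _) (by linarith)
  rw [abs_le]
  constructor
  · have := key v u hv hu
    rw [abs_sub_comm] at this
    linarith
  · exact key u v hu hv

lemma fn_bound {p : ℝ × ℝ} (hp : p ∈ Dset) (n : ℕ) :
    |(Real.log (qden (pq p.2) n : ℝ) - birk p n) - (- Real.log (1 + p.1 * p.2))|
      ≤ 1 / (qden (pq p.2) n : ℝ)^2 ∧
    -Real.log 2 ≤ Real.log (qden (pq p.2) n : ℝ) - birk p n := by
  have hb := birk_eq hp n
  obtain ⟨hx, -, hy, hyi⟩ := hp
  have hq : (1:ℝ) ≤ qden (pq p.2) n := by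
    exact_mod_cast (qden_pos_s11 (pq_pos hy hyi) n).1
  have hr : (0:ℝ) ≤ pnum (pq p.2) n := Nat.cast_nonneg _
  have hle : ∀ n, pnum (pq p.2) n ≤ qden (pq p.2) n := by
    intro n
    suffices h : pnum (pq p.2) n ≤ qden (pq p.2) n ∧ pnum (pq p.2) (n+1) ≤ qden (pq p.2) (n+1)
      from h.1
    induction n with
    | zero => simp [pnum, qden, pq_pos hy hyi 1]
    | succ n ih =>
      refine ⟨ih.2, ?_⟩
      show pq p.2 (n+2) * pnum (pq p.2) (n+1) + pnum (pq p.2) n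
        ≤ pq p.2 (n+2) * qden (pq p.2) (n+1) + qden (pq p.2) n
      have := Nat.mul_le_mul_left (pq p.2 (n+2)) ih.2
      omega
  have hrq : (pnum (pq p.2) n : ℝ) ≤ qden (pq p.2) n := by exact_mod_cast hle n
  have ha := approx hy hyi n
  set q : ℝ := ((qden (pq p.2) n : ℕ) : ℝ)
  set r : ℝ := ((pnum (pq p.2) n : ℕ) : ℝ)
  have hlog : Real.log (q + p.1 * r) = Real.log q + Real.log (1 + p.1 * (r / q)) := by
    rw [← Real.log_mul (by positivity)]
    · congr 1; field_simp
    · have : 0 ≤ p.1 * (r / q) := mul_nonneg hx.1.le (by positivity)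
      linarith
  have hu : 0 ≤ p.1 * (r / q) := mul_nonneg hx.1.le (by positivity)
  have hv : 0 ≤ p.1 * p.2 := mul_nonneg hx.1.le hy.1.le
  rw [hb, hlog]
  constructor
  · have := log_one_add_sub hv hu
    rw [← mul_sub, abs_mul, abs_of_pos hx.1] at this
    have h2 : p.1 * |p.2 - r / q| ≤ 1 / q^2 :=
      (mul_le_of_le_one_left (abs_nonneg _) hx.2.le).trans ha
    refine le_trans (le_of_eq ?_) (this.trans h2)
    congr 1; ring
  · have h1 : r / q ≤ 1 := by rw [div_le_one (by linarith)]; exact hrq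
    have : p.1 * (r/q) ≤ 1 := mul_le_one₀ hx.2.le (by positivity) h1
    have := Real.log_le_log (by linarith) (show 1 + p.1 * (r/q) ≤ 2 by linarith)
    linarith

lemma q_tendsto {y : ℝ} (h0 : y ∈ Ioo (0:ℝ) 1) (hi : Irrational y) :
    Tendsto (fun n => (qden (pq y) n : ℝ)) atTop atTop := by
  apply tendsto_atTop_mono (fun n => ?_) tendsto_natCast_atTop_atTop
  exact_mod_cast (qden_pos_s11 (pq_pos h0 hi) n).2

lemma f_eq (f : ℝ × ℝ → ℝ) {p : ℝ × ℝ} (hp : p ∈ Dset)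
    (hf : Tendsto (fun n => Real.log (qden (pq p.2) n : ℝ) - birk p n) atTop (nhds (f p))) :
    f p = - Real.log (1 + p.1 * p.2) := by
  refine tendsto_nhds_unique hf ?_
  rw [tendsto_iff_norm_sub_tendsto_zero]
  have hq := q_tendsto hp.2.2.1 hp.2.2.2
  refine squeeze_zero (fun _ => norm_nonneg _) (fun n => (fn_bound hp n).1) ?_
  simp only [one_div]
  exact ((tendsto_pow_atTop two_ne_zero).comp hq).inv_tendsto_atTop

lemma key {p : ℝ × ℝ} (hp : p ∈ Dset) {fC ε R : ℝ} (h0 : fC ≤ 0)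
    (h1 : - Real.log (1 + p.1 * p.2) ≤ fC) (h2 : fC - ε / 2 ≤ - Real.log (1 + p.1 * p.2))
    (hR : 0 < R) (hRε : 4 / R ^ 2 ≤ ε / 16)
    (hne : nIndex p.2 R ≠ rTime p (Real.log R - fC)) :
    ∃ m, Real.exp (-(9/16 * ε)) * R ≤ qden (pq p.2) m ∧
      (qden (pq p.2) m : ℝ) ≤ Real.exp (ε/16) * R := by
  have hqpos : ∀ n, (0:ℝ) < qden (pq p.2) n := fun n => by
    exact_mod_cast (qden_pos_s11 (pq_pos hp.2.2.1 hp.2.2.2) n).1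
  have hq := q_tendsto hp.2.2.1 hp.2.2.2
  have hsmall : ∀ n, R / 2 ≤ qden (pq p.2) n → 1 / (qden (pq p.2) n : ℝ)^2 ≤ ε / 16 := by
    intro n hn
    refine le_trans ?_ hRε
    rw [div_le_div_iff₀ (pow_pos (hqpos n) 2) (by positivity)]
    nlinarith
  have fin : ∀ n, Real.log R - 9/16 * ε ≤ Real.log (qden (pq p.2) n) →
      Real.log (qden (pq p.2) n) ≤ Real.log R + ε/16 →
      ∃ m, Real.exp (-(9/16 * ε)) * R ≤ qden (pq p.2) m ∧
      (qden (pq p.2) m : ℝ) ≤ Real.exp (ε/16) * R := by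
    intro n a c
    refine ⟨n, ?_, ?_⟩
    · rw [← Real.log_le_log_iff (by positivity) (hqpos n),
        Real.log_mul (Real.exp_ne_zero _) hR.ne', Real.log_exp]
      linarith
    · rw [← Real.log_le_log_iff (hqpos n) (by positivity),
        Real.log_mul (Real.exp_ne_zero _) hR.ne', Real.log_exp]
      linarith
  have hε : 0 < ε := by
    have : 0 < 4 / R^2 := by positivity
    linarith
  have ne1 : {n : ℕ | R < (qden (pq p.2) n : ℝ)}.Nonempty := (hq.eventually_gt_atTop R).exists
  have ne2 : {r : ℕ | Real.log R - fC < birk p r}.Nonempty := by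
    have h3 := Real.tendsto_log_atTop.comp hq
    obtain ⟨r, hr⟩ := (h3.eventually_gt_atTop (Real.log R - fC)).exists
    refine ⟨r, lt_of_lt_of_le hr ?_⟩
    rw [birk_eq hp]
    apply Real.log_le_log (hqpos r)
    have := mul_nonneg hp.1.1.le (Nat.cast_nonneg (α := ℝ) (pnum (pq p.2) r))
    linarith
  rcases lt_or_gt_of_ne hne with h | h
  · have a : R < qden (pq p.2) (nIndex p.2 R) := Nat.sInf_mem ne1
    have c : ¬ (Real.log R - fC < birk p (nIndex p.2 R)) := Nat.notMem_of_lt_sInf h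
    generalize nIndex p.2 R = m at *
    obtain ⟨b1, b2⟩ := fn_bound hp m
    have := hsmall m (by linarith)
    have b3 := (abs_le.1 b1).2
    have := Real.log_lt_log hR a
    apply fin m <;> linarith
  · have a : Real.log R - fC < birk p (rTime p (Real.log R - fC)) := Nat.sInf_mem ne2
    have c : ¬ (R < qden (pq p.2) (rTime p (Real.log R - fC))) := Nat.notMem_of_lt_sInf h
    generalize rTime p (Real.log R - fC) = m at *
    obtain ⟨b1, b2⟩ := fn_bound hp m
    have hh : R / 2 ≤ qden (pq p.2) m := by
      rw [← Real.log_le_log_iff (by positivity) (hqpos m), Real.log_div hR.ne' two_ne_zero]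
      linarith
    have := hsmall m hh
    have b3 := (abs_le.1 b1).1
    have := Real.log_le_log (hqpos m) (not_lt.1 c)
    apply fin m <;> linarith

lemma cyl_interval (n : ℕ) : ∀ (b : ℕ → ℕ), (∀ k, 1 ≤ k → k ≤ n → 0 < b k) →
    ∃ α β : ℝ, 0 ≤ α ∧ α < β ∧ β ≤ 1 ∧ ∀ y : ℝ,
      ((y ∈ Ioo (0:ℝ) 1 ∧ Irrational y) ∧ ∀ k, 1 ≤ k → k ≤ n → pq y k = b k) ↔
        (y ∈ Ioo α β ∧ Irrational y) := by
  induction n with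
  | zero =>
    intro b _
    refine ⟨0, 1, le_rfl, one_pos, le_rfl, fun y => ?_⟩
    constructor
    · exact fun h => h.1
    · exact fun h => ⟨h, fun k h1 h2 => by omega⟩
  | succ n ih =>
    intro b hb
    obtain ⟨α, β, hα, hαβ, hβ, H⟩ := ih (fun k => b (k+1)) (fun k h1 h2 => hb _ (by omega) (by omega))
    have hb1 : (1:ℝ) ≤ b 1 := by exact_mod_cast hb 1 le_rfl (by omega)
    refine ⟨1 / (b 1 + β), 1 / (b 1 + α), one_div_nonneg.2 (by linarith), ?_, ?_, ?_⟩
    · apply one_div_lt_one_div_of_lt <;> linarith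
    · rw [div_le_one (by linarith)]; linarith
    intro y
    have hshift : ∀ k, 1 ≤ k → pq y (k+1) = pq (gaussMap y) k := by
      intro k hk
      obtain ⟨j, rfl⟩ := Nat.exists_eq_add_of_le' hk
      simp [pq, Function.iterate_succ_apply]
    constructor
    · rintro ⟨⟨hy, hyi⟩, hk⟩
      obtain ⟨g1, g2, g3, g4, g5⟩ := g_step hy hyi
      have hg := (H (gaussMap y)).1 ⟨⟨g1, g2⟩, fun k h1 h2 => by
        rw [← hshift k h1]; exact hk _ (by omega) (by omega)⟩
      have e : ⌊1/y⌋₊ = b 1 := hk 1 le_rfl (by omega)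
      rw [e] at g5
      have : y = 1 / (b 1 + gaussMap y) := by rw [← g5]; simp
      refine ⟨?_, hyi⟩
      rw [this]
      obtain ⟨⟨u, v⟩, -⟩ := hg
      constructor <;> apply one_div_lt_one_div_of_lt <;> linarith
    · rintro ⟨⟨u, v⟩, hyi⟩
      have hy0 : 0 < y := lt_trans (one_div_pos.2 (by linarith)) u
      have u' : 1 / y < b 1 + β := by
        rw [div_lt_iff₀ (by linarith)] at u
        rw [div_lt_iff₀ hy0]; linarith
      have v' : b 1 + α < 1 / y := by
        rw [lt_div_iff₀ (by linarith)] at v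
        rw [lt_div_iff₀ hy0]; linarith
      have hy1 : y < 1 := by
        refine lt_of_lt_of_le v ?_
        rw [div_le_one (by linarith)]; linarith
      obtain ⟨g1, g2, g3, g4, g5⟩ := g_step ⟨hy0, hy1⟩ hyi
      have e : ⌊1/y⌋₊ = b 1 := by
        rw [Nat.floor_eq_iff (by positivity)]
        constructor <;> linarith
      rw [e] at g5
      have hg := (H (gaussMap y)).2 ⟨⟨by linarith, by linarith⟩, g2⟩
      refine ⟨⟨⟨hy0, hy1⟩, hyi⟩, fun k h1 h2 => ?_⟩
      obtain ⟨j, rfl⟩ := Nat.exists_eq_add_of_le' h1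
      rcases Nat.eq_zero_or_pos j with rfl | hj
      · exact e
      · rw [hshift j hj]; exact hg.2 j hj (by omega)

/-- Measure of the points of an interval having a rational approximation with denominator
between `A` and `B`. -/
lemma bad_measure {α β A B : ℝ} (hαβ : α < β) (hA : 1 ≤ A) (hAB : A ≤ B) :
    volume {y : ℝ | y ∈ Ioo α β ∧ ∃ (r q : ℕ), A ≤ q ∧ (q:ℝ) ≤ B ∧ |y - r / q| ≤ 1 / (q:ℝ)^2} ≤
      ENNReal.ofReal ((2 * (β - α) + 6 / A) * ((B - A + 1) / A)) := by
  set F := Finset.Icc ⌈A⌉₊ ⌊B⌋₊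
  set P : ℕ → Finset ℤ := fun q => Finset.Icc ⌈(q:ℝ) * α - 1 / q⌉ ⌊(q:ℝ) * β + 1 / q⌋
  have hF : ∀ q ∈ F, A ≤ (q:ℝ) := fun q hq => (Nat.ceil_le.1 (Finset.mem_Icc.1 hq).1)
  have sub : {y : ℝ | y ∈ Ioo α β ∧ ∃ (r q : ℕ), A ≤ q ∧ (q:ℝ) ≤ B ∧ |y - r / q| ≤ 1 / (q:ℝ)^2} ⊆
      ⋃ q ∈ F, ⋃ r ∈ P q, Metric.closedBall ((r:ℝ) / q) (1 / (q:ℝ)^2) := by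
    rintro y ⟨⟨ya, yb⟩, r, q, hq1, hq2, hy⟩
    simp only [mem_iUnion]
    have hq0 : (0:ℝ) < q := by linarith
    refine ⟨q, Finset.mem_Icc.2 ⟨Nat.ceil_le.2 hq1, Nat.le_floor hq2⟩, (r:ℤ), ?_, ?_⟩
    · obtain ⟨c1, c2⟩ := abs_le.1 hy
      have e1 : (q:ℝ) * (y - r / q) = q * y - r := by field_simp
      have e2 : (q:ℝ) * (1 / (q:ℝ)^2) = 1 / q := by field_simp
      have d1 := mul_le_mul_of_nonneg_left c1 hq0.le
      have d2 := mul_le_mul_of_nonneg_left c2 hq0.le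
      rw [mul_neg] at d1
      rw [e1, e2] at d1 d2
      have f1 := mul_le_mul_of_nonneg_left ya.le hq0.le
      have f2 := mul_le_mul_of_nonneg_left yb.le hq0.le
      refine Finset.mem_Icc.2 ⟨Int.ceil_le.2 ?_, Int.le_floor.2 ?_⟩ <;> push_cast <;> linarith
    · rw [Metric.mem_closedBall, Real.dist_eq, Int.cast_natCast]; exact hy
  have hinner : ∀ q ∈ F, volume (⋃ r ∈ P q, Metric.closedBall ((r:ℝ) / q) (1 / (q:ℝ)^2)) ≤
      ENNReal.ofReal ((2 * (β - α) + 6 / A) / A) := by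
    intro q hq
    have hq1 := hF q hq
    have hq0 : (0:ℝ) < q := by linarith
    refine (measure_biUnion_finset_le _ _).trans ?_
    simp only [Real.volume_closedBall, Finset.sum_const, nsmul_eq_mul]
    rw [← ENNReal.ofReal_natCast, ← ENNReal.ofReal_mul (Nat.cast_nonneg _)]
    apply ENNReal.ofReal_le_ofReal
    have hcard : ((P q).card : ℝ) ≤ q * (β - α) + 3 := by
      have hq1' : 1 / (q:ℝ) ≤ 1 := by rw [div_le_one hq0]; linarith
      have hnn : 0 ≤ (q:ℝ) * (β - α) := mul_nonneg hq0.le (by linarith)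
      rw [Int.card_Icc]
      have : ((⌊(q:ℝ) * β + 1 / q⌋ + 1 - ⌈(q:ℝ) * α - 1 / q⌉ : ℤ) : ℝ) ≤ q * (β - α) + 3 := by
        push_cast
        have := Int.floor_le ((q:ℝ) * β + 1 / q)
        have := Int.le_ceil ((q:ℝ) * α - 1 / q)
        linarith
      rcases le_total 0 (⌊(q:ℝ) * β + 1 / q⌋ + 1 - ⌈(q:ℝ) * α - 1 / q⌉) with h | h
      · rw [← Int.toNat_of_nonneg h] at this
        exact_mod_cast this
      · rw [Int.toNat_of_nonpos h]; push_cast; linarith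
    have : ((P q).card : ℝ) * (2 * (1 / (q:ℝ)^2)) ≤ (q * (β - α) + 3) * (2 * (1 / (q:ℝ)^2)) :=
      mul_le_mul_of_nonneg_right hcard (by positivity)
    refine this.trans ?_
    have e : (q * (β - α) + 3) * (2 * (1 / (q:ℝ)^2)) = (2 * (β - α) + 6 / q) / q := by
      field_simp
      ring
    rw [e]
    have hba : 0 < β - α := by linarith
    have hA0 : 0 < A := by linarith
    gcongr
  refine (measure_mono sub).trans ((measure_biUnion_finset_le _ _).trans
    ((Finset.sum_le_sum hinner).trans ?_))
  rw [Finset.sum_const, nsmul_eq_mul, ← ENNReal.ofReal_natCast,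
    ← ENNReal.ofReal_mul (Nat.cast_nonneg _)]
  apply ENNReal.ofReal_le_ofReal
  have hA0 : 0 < A := by linarith
  have hba : 0 < β - α := by linarith
  have hc : (F.card : ℝ) ≤ B - A + 1 := by
    rw [Nat.card_Icc]
    rcases le_total ⌈A⌉₊ (⌊B⌋₊ + 1) with h | h
    · rw [Nat.cast_sub h]
      have := Nat.floor_le (show 0 ≤ B by linarith)
      have := Nat.le_ceil A
      push_cast
      linarith
    · rw [Nat.sub_eq_zero_of_le h]; push_cast; linarith
  calc (F.card : ℝ) * ((2 * (β - α) + 6 / A) / A)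
      ≤ (B - A + 1) * ((2 * (β - α) + 6 / A) / A) :=
        mul_le_mul_of_nonneg_right hc (by positivity)
    _ = _ := by ring

lemma meas_Dset : MeasurableSet Dset := by
  have hI : MeasurableSet {x : ℝ | Irrational x} := by
    have : {x : ℝ | Irrational x} = (Set.range ((↑) : ℚ → ℝ))ᶜ := rfl
    rw [this]
    exact (Set.countable_range _).measurableSet.compl
  have h1 : MeasurableSet (Ioo (0:ℝ) 1 ∩ {x : ℝ | Irrational x}) := measurableSet_Ioo.inter hI
  have : Dset = (Ioo (0:ℝ) 1 ∩ {x : ℝ | Irrational x}) ×ˢ (Ioo (0:ℝ) 1 ∩ {x : ℝ | Irrational x}) := by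
    ext p; simp only [Dset, mem_ofPred_eq, mem_prod, mem_inter_iff]; tauto
  rw [this]
  exact h1.prod h1

lemma mu2_upper (s : Set (ℝ × ℝ)) : mu2 s ≤ ENNReal.ofReal (1 / Real.log 2) * volume s := by
  have hl := Real.log_pos one_lt_two
  have : mu2 ≤ (volume.restrict Dset).withDensity fun _ => ENNReal.ofReal (1 / Real.log 2) := by
    apply withDensity_mono
    filter_upwards [ae_restrict_mem meas_Dset] with p hp
    apply ENNReal.ofReal_le_ofReal
    apply one_div_le_one_div_of_le hl
    have := mul_pos hp.1.1 hp.2.2.1.1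
    exact le_mul_of_one_le_right hl.le (by nlinarith)
  refine (this s).trans ?_
  rw [withDensity_const, Measure.smul_apply, smul_eq_mul]
  gcongr
  exact Measure.restrict_le_self

lemma mu2_lower {s : Set (ℝ × ℝ)} (hs : s ⊆ Dset) :
    ENNReal.ofReal (1 / (4 * Real.log 2)) * volume s ≤ mu2 s := by
  have hl := Real.log_pos one_lt_two
  have : (volume.restrict Dset).withDensity (fun _ => ENNReal.ofReal (1 / (4 * Real.log 2))) ≤ mu2 := by
    apply withDensity_mono
    filter_upwards [ae_restrict_mem meas_Dset] with p hp
    apply ENNReal.ofReal_le_ofReal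
    have h0 := mul_pos hp.1.1 hp.2.2.1.1
    have h1 : p.1 * p.2 ≤ 1 := mul_le_one₀ hp.1.2.le hp.2.2.1.1.le hp.2.2.1.2.le
    apply one_div_le_one_div_of_le (by positivity)
    have : (1 + p.1 * p.2)^2 ≤ 4 := by nlinarith
    nlinarith
  refine le_trans ?_ (this s)
  rw [withDensity_const, Measure.smul_apply, smul_eq_mul, Measure.restrict_apply' meas_Dset,
    inter_eq_left.2 hs]

lemma vol_irr (α β : ℝ) : volume {y : ℝ | y ∈ Ioo α β ∧ Irrational y} = ENNReal.ofReal (β - α) := by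
  have : {y : ℝ | y ∈ Ioo α β ∧ Irrational y} = Ioo α β \ Set.range ((↑) : ℚ → ℝ) := rfl
  rw [this, measure_sdiff_null ((Set.countable_range _).measure_zero _), Real.volume_Ioo]

lemma choose_R {ε l : ℝ} (hε : 0 < ε) (hε' : ε < 1/7) (hl : 0 < l) :
    ∃ R₀ > (0:ℝ), ∀ R, R₀ ≤ R → 4 / R^2 ≤ ε/16 ∧ 1 ≤ Real.exp (-(9/16*ε)) * R ∧
      (2 * l + 6 / (Real.exp (-(9/16*ε)) * R)) *
        ((Real.exp (ε/16) * R - Real.exp (-(9/16*ε)) * R + 1) / (Real.exp (-(9/16*ε)) * R))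
        ≤ 7/4 * ε * l := by
  set c := Real.exp (-(9/16*ε)) with hc
  have hc0 : 0 < c := Real.exp_pos _
  set d := Real.exp (ε/16) with hd
  have hdc : d / c - 1 ≤ 3/4 * ε := by
    rw [hd, hc, ← Real.exp_sub]
    have h := Real.abs_exp_sub_one_sub_id_le (x := 5/8*ε) (by rw [abs_le]; constructor <;> linarith)
    have h2 := (abs_le.1 h).2
    have : ε/16 - -(9/16*ε) = 5/8*ε := by ring
    rw [this]
    nlinarith
  have t1 : Tendsto (fun R : ℝ => 4 / R^2) atTop (nhds 0) :=
    (tendsto_pow_atTop two_ne_zero).const_div_atTop 4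
  have t0 : Tendsto (fun R : ℝ => c * R) atTop atTop := tendsto_id.const_mul_atTop hc0
  have t2 : Tendsto (fun R : ℝ => (2 * l + 6 / (c * R)) * ((d / c - 1) + 1 / (c * R))) atTop
      (nhds ((2 * l + 0) * ((d/c - 1) + 0))) :=
    (tendsto_const_nhds.add (t0.const_div_atTop 6)).mul (tendsto_const_nhds.add (t0.const_div_atTop 1))
  have hlim : (2 * l + 0) * ((d/c - 1) + 0) < 7/4 * ε * l := by
    have := mul_le_mul_of_nonneg_left hdc hl.le
    have := mul_pos hε hl
    nlinarith
  have ev := ((t1.eventually_lt_const (show 0 < ε/16 by positivity)).and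
    ((t0.eventually_ge_atTop 1).and ((t2.eventually_lt_const hlim).and (eventually_gt_atTop 0))))
  obtain ⟨R₀, h⟩ := eventually_atTop.1 ev
  refine ⟨max R₀ 1, by positivity, fun R hR => ?_⟩
  obtain ⟨a1, a2, a3, a4⟩ := h R (le_trans (le_max_left _ _) hR)
  refine ⟨a1.le, a2, le_trans (le_of_eq ?_) a3.le⟩
  congr 1
  field_simp

/-- Let `f` be the limit of the functions `f_n = ln qₙ − Sₙφ` on `D`. Let
`ε > 0` and let `C` be a bi-sided cylinder of length `n` with `|f − f_C| ≤ ε/2` on `C`, where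
`f_C = sup_C f`. Then there is `R₀ > 0` such that for all `R ≥ R₀`, setting `T = ln R − f_C`,
the set `U = {α̂ ∈ C : n_R(α̂) ≠ r(α̂, T)}` satisfies `μ₂(U ∩ C) ≤ 7ε·μ₂(C)`. -/
theorem statement11 (f : ℝ × ℝ → ℝ)
    (hf : ∀ p ∈ Dset,
      Filter.Tendsto (fun n => Real.log (qden (pq p.2) n : ℝ) - birk p n)
        Filter.atTop (nhds (f p)))
    (ε : ℝ) (hε : 0 < ε) (n : ℕ) (b : ℤ → ℕ)
    (hb : ∀ m : ℤ, -(n : ℤ) ≤ m → m ≤ (n : ℤ) → 0 < b m)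
    (fC : ℝ) (hfC : fC = sSup (f '' cylinder n b))
    (hvar : ∀ p ∈ cylinder n b, |f p - fC| ≤ ε / 2) :
    ∃ R₀ > (0 : ℝ), ∀ R : ℝ, R₀ ≤ R →
      mu2 {p ∈ cylinder n b | nIndex p.2 R ≠ rTime p (Real.log R - fC)} ≤
        ENNReal.ofReal (7 * ε) * mu2 (cylinder n b) := by
  have hsub : cylinder n b ⊆ Dset := fun p hp => hp.1
  rcases le_or_gt (1/7) ε with hbig | hsm
  · refine ⟨1, one_pos, fun R _ => ?_⟩
    refine (measure_mono (sep_subset _ _)).trans ?_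
    refine le_mul_of_one_le_left (zero_le) ?_
    rw [ENNReal.one_le_ofReal]; linarith
  have hfe : ∀ p ∈ Dset, f p = - Real.log (1 + p.1 * p.2) := fun p hp => f_eq f hp (hf p hp)
  have hf0 : ∀ p ∈ cylinder n b, f p ≤ 0 := by
    intro p hp
    have hD := hsub hp
    rw [hfe p hD]
    have := Real.log_nonneg (show 1 ≤ 1 + p.1 * p.2 by nlinarith [mul_pos hD.1.1 hD.2.2.1.1])
    linarith
  have hfC0 : fC ≤ 0 := by
    rw [hfC]
    apply Real.sSup_nonpos
    rintro _ ⟨p, hp, rfl⟩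
    exact hf0 p hp
  have hfle : ∀ p ∈ cylinder n b, f p ≤ fC := by
    intro p hp
    rw [hfC]
    refine le_csSup ⟨0, ?_⟩ ⟨p, hp, rfl⟩
    rintro _ ⟨p, hp, rfl⟩
    exact hf0 p hp
  obtain ⟨α, β, -, hαβ, -, H⟩ := cyl_interval n (fun k => b (k:ℤ))
    (fun k h1 h2 => hb k (by omega) (by exact_mod_cast h2))
  obtain ⟨R₀, hR₀, HR⟩ := choose_R hε hsm (sub_pos.2 hαβ)
  refine ⟨R₀, hR₀, fun R hR => ?_⟩
  obtain ⟨k1, k2, k3⟩ := HR R hR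
  have hRpos : 0 < R := hR₀.trans_le hR
  set A := Real.exp (-(9/16*ε)) * R
  set B := Real.exp (ε/16) * R
  have hAB : A ≤ B := by
    apply mul_le_mul_of_nonneg_right _ hRpos.le
    apply Real.exp_le_exp.2; linarith
  set J : Set ℝ := {x | (x ∈ Ioo (0:ℝ) 1 ∧ Irrational x) ∧ ∀ j : ℕ, j ≤ n → pq x (j+1) = b (-(j:ℤ))}
  set I : Set ℝ := {y : ℝ | y ∈ Ioo α β ∧ Irrational y}
  set Bad : Set ℝ :=
    {y : ℝ | y ∈ Ioo α β ∧ ∃ (r q : ℕ), A ≤ q ∧ (q:ℝ) ≤ B ∧ |y - r / q| ≤ 1 / (q:ℝ)^2}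
  have hC : cylinder n b = J ×ˢ I := by
    ext p
    have := H p.2
    simp only [_root_.cylinder, Dset, J, I, mem_ofPred_eq, mem_prod]
    rw [← this]
    tauto
  have hU : {p ∈ cylinder n b | nIndex p.2 R ≠ rTime p (Real.log R - fC)} ⊆ J ×ˢ Bad := by
    rintro p ⟨hp, hne⟩
    have hD := hsub hp
    have g1 := hfle p hp
    have g2 := (abs_le.1 (hvar p hp)).1
    rw [hfe p hD] at g1 g2
    obtain ⟨m, m1, m2⟩ := key hD hfC0 g1 (by linarith) hRpos k1 hne
    rw [hC] at hp
    exact ⟨hp.1, hp.2.1, _, _, m1, m2, approx hD.2.2.1 hD.2.2.2 m⟩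
  have hl := Real.log_pos one_lt_two
  have hBad : volume Bad ≤ ENNReal.ofReal (7/4 * ε * (β - α)) :=
    (bad_measure hαβ k2 hAB).trans (ENNReal.ofReal_le_ofReal k3)
  calc mu2 {p ∈ cylinder n b | nIndex p.2 R ≠ rTime p (Real.log R - fC)}
      ≤ ENNReal.ofReal (1 / Real.log 2) * volume (J ×ˢ Bad) :=
        (measure_mono hU).trans (mu2_upper _)
    _ = ENNReal.ofReal (1 / Real.log 2) * (volume J * volume Bad) := by
        rw [Measure.volume_eq_prod, Measure.prod_prod]
    _ ≤ ENNReal.ofReal (1 / Real.log 2) * (volume J * ENNReal.ofReal (7/4 * ε * (β - α))) := by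
        gcongr
    _ = ENNReal.ofReal (7 * ε) *
        (ENNReal.ofReal (1 / (4 * Real.log 2)) * (volume J * ENNReal.ofReal (β - α))) := by
        have e1 : ENNReal.ofReal (7/4 * ε * (β - α)) =
            ENNReal.ofReal (7/4 * ε) * ENNReal.ofReal (β - α) :=
          ENNReal.ofReal_mul (by positivity)
        have e2 : ENNReal.ofReal (1 / Real.log 2) * ENNReal.ofReal (7/4 * ε) =
            ENNReal.ofReal (7 * ε) * ENNReal.ofReal (1 / (4 * Real.log 2)) := by
          rw [← ENNReal.ofReal_mul (by positivity), ← ENNReal.ofReal_mul (by positivity)]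
          congr 1
          field_simp
        rw [e1]
        calc _ = (ENNReal.ofReal (1 / Real.log 2) * ENNReal.ofReal (7/4 * ε)) *
              (volume J * ENNReal.ofReal (β - α)) := by ring
          _ = _ := by rw [e2]; ring
    _ = ENNReal.ofReal (7 * ε) *
        (ENNReal.ofReal (1 / (4 * Real.log 2)) * volume (cylinder n b)) := by
        rw [hC, Measure.volume_eq_prod, Measure.prod_prod, vol_irr]
    _ ≤ ENNReal.ofReal (7 * ε) * mu2 (cylinder n b) := by
        gcongr
        exact mu2_lower hsub
end

section
/- The function φ(x,y) = ln(⌊1/y⌋ + x) is integrable with respect to μ2: ∫_{(0,1)²} ln(⌊1/y⌋ + x) · (ln 2 · (1+xy)²)^{−1} dx dy < ∞. -/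
open MeasureTheory Filter Set Topology

/-- The roof function `φ(x,y) = ln(⌊1/y⌋ + x)` is integrable with respect
to `μ₂`. -/
theorem statement16 : Integrable roof mu2 := by
  have hm : Measurable roof := by unfold roof; fun_prop
  have hd : Measurable fun p : ℝ × ℝ =>
      ENNReal.ofReal (1 / (Real.log 2 * (1 + p.1 * p.2) ^ 2)) := by fun_prop
  have hl2 : 0 < Real.log 2 := Real.log_pos (by norm_num)
  unfold mu2
  rw [integrable_withDensity_iff_integrable_smul' hd (by simp)]
  have hsub : Dset ⊆ Ioo (0 : ℝ) 1 ×ˢ Ioo (0 : ℝ) 1 := fun p hp => ⟨hp.1, hp.2.2.1⟩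
  refine IntegrableOn.mono_set (t := Ioo (0 : ℝ) 1 ×ˢ Ioo (0 : ℝ) 1) ?_ hsub
  have hlog : IntegrableOn (fun y : ℝ => (1 / Real.log 2) * (Real.log 2 - Real.log y))
      (Ioo 0 1) := by
    have h : IntegrableOn Real.log (Ioo (0 : ℝ) 1) :=
      ((intervalIntegrable_iff_integrableOn_Ioo_of_le zero_le_one).1
        intervalIntegral.intervalIntegrable_log')
    have hc : IntegrableOn (fun _ : ℝ => Real.log 2) (Ioo (0 : ℝ) 1) :=
      integrableOn_const (by simp)
    exact (hc.sub h).const_mul _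
  have hb : IntegrableOn (fun p : ℝ × ℝ => (1 / Real.log 2) * (Real.log 2 - Real.log p.2))
      (Ioo (0 : ℝ) 1 ×ˢ Ioo (0 : ℝ) 1) := by
    unfold IntegrableOn
    rw [Measure.volume_eq_prod, ← Measure.prod_restrict]
    exact Integrable.comp_snd hlog _
  refine Integrable.mono' hb ?_ ?_
  · exact (hd.ennreal_toReal.smul hm).aestronglyMeasurable
  · refine ae_restrict_of_forall_mem (measurableSet_Ioo.prod measurableSet_Ioo) ?_
    rintro ⟨x, y⟩ ⟨⟨hx0, hx1⟩, hy0, hy1⟩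
    simp only at hx0 hx1 hy0 hy1
    have hxy : 0 < x * y := mul_pos hx0 hy0
    have h1 : (1 : ℝ) ≤ (⌊1 / y⌋ : ℝ) := by
      have : (1 : ℤ) ≤ ⌊1 / y⌋ := Int.le_floor.2 (by
        rw [Int.cast_one, le_div_iff₀ hy0]; linarith)
      exact_mod_cast this
    have h2 : (⌊1 / y⌋ : ℝ) + x ≤ 2 / y := by
      have h3 := Int.floor_le (1 / y)
      have h4 : (1 : ℝ) ≤ 1 / y := by rw [le_div_iff₀ hy0]; linarith
      have h5 : 2 / y = 1 / y + 1 / y := by ring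
      linarith
    have h6 : 0 ≤ roof (x, y) := Real.log_nonneg (by simp only; linarith)
    have h7 : roof (x, y) ≤ Real.log 2 - Real.log y := by
      rw [← Real.log_div two_ne_zero hy0.ne']
      exact Real.log_le_log (by simp only; linarith) h2
    have h8 : 0 ≤ 1 / (Real.log 2 * (1 + x * y) ^ 2) := by positivity
    simp only
    rw [ENNReal.toReal_ofReal h8, smul_eq_mul, Real.norm_of_nonneg (mul_nonneg h8 h6)]
    refine mul_le_mul ?_ h7 h6 (by positivity)
    apply one_div_le_one_div_of_le hl2
    nlinarith [mul_pos hl2 hxy, mul_pos hl2 (mul_pos hxy hxy)]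
end

section
/- The special flow {Φ_t} built over the natural extension Ĝ of the Gauss map with roof function φ(x,y) = ln(⌊1/y⌋ + x) is mixing: for all measurable sets A, B ⊆ D_Φ, μ3(Φ_t^{−1}(A) ∩ B) → μ3(A)·μ3(B) as t → +∞. -/
open MeasureTheory Filter Set Topology

namespace SF

section Hilbert
variable {H : Type*} [NormedAddCommGroup H] [InnerProductSpace ℝ H] [CompleteSpace H]

lemma exists_wlim (𝒰 : Ultrafilter ℝ) (v : ℝ → H) (C : ℝ) (hv : ∀ t, ‖v t‖ ≤ C) :
    ∃ h : H, ∀ g, Tendsto (fun t => inner ℝ (v t) g) 𝒰 (𝓝 (inner ℝ h g)) := by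
  let w : ℝ → WeakDual ℝ H := fun t => StrongDual.toWeakDual (InnerProductSpace.toDual ℝ H (v t))
  have hc := WeakDual.isCompact_closedBall (𝕜 := ℝ) (E := H) 0 C
  obtain ⟨d, hd, hlim⟩ := hc.ultrafilter_le_nhds (𝒰.map w) (by
    simp only [le_principal_iff]
    refine Filter.mem_map.2 (Filter.univ_mem' fun t => ?_)
    simpa [w] using hv t)
  refine ⟨(InnerProductSpace.toDual ℝ H).symm (WeakDual.toStrongDual d), fun g => ?_⟩
  have h1 : Tendsto w 𝒰 (𝓝 d) := hlim
  have h2 := ((WeakDual.eval_continuous g).tendsto d).comp h1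
  simpa [w, Function.comp_def] using h2

theorem hilbert_mixing (U : ℝ → H →ₗᵢ[ℝ] H) (K : H →ₗᵢ[ℝ] H) (W : ℝ → Submodule ℝ H) (e : H)
    (hU : ∀ t f g, inner ℝ (U t f) g = inner ℝ f (U (-t) g))
    (hK : ∀ f g, inner ℝ (K f) g = inner ℝ f (K g))
    (hKU : ∀ t f, K (U t f) = U (-t) (K f))
    (hWc : ∀ c, IsClosed (W c : Set H)) (hWm : Monotone W)
    (hUW : ∀ t c f, f ∈ W c → U t f ∈ W (c - t))
    (hd : ∀ f : H, ∀ ε > 0, ∃ c, ∃ w ∈ W c, ‖f - w‖ < ε)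
    (he : ‖e‖ = 1) (hUe : ∀ t, U t e = e)
    (herg : ∀ f, (∀ c, f ∈ W c) → (∀ c, K f ∈ W c) → ∃ a : ℝ, f = a • e) (f g : H) :
    Tendsto (fun t => inner ℝ (U t f) g) atTop (𝓝 (inner ℝ f e * inner ℝ e g)) := by
  rw [tendsto_iff_ultrafilter]
  intro 𝒰 h𝒰
  have key : ∀ f h : H, (∀ g, Tendsto (fun t => inner ℝ (U t f) g) 𝒰 (𝓝 (inner ℝ h g))) →
      ∀ c, h ∈ W c := by
    intro f h hh c
    haveI : CompleteSpace (W c) := (hWc c).completeSpace_coe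
    rw [← Submodule.orthogonal_orthogonal (W c), Submodule.mem_orthogonal]
    intro g hg
    rw [real_inner_comm]
    by_contra hne
    have hpos : 0 < |inner ℝ h g| := abs_pos.2 hne
    have hgn : 0 < ‖g‖ := by
      rw [norm_pos_iff]; rintro rfl; simp at hne
    obtain ⟨c0, w, hw, hfw⟩ := hd f (|inner ℝ h g| / 2 / ‖g‖) (by positivity)
    have hev : ∀ᶠ t in (𝒰 : Filter ℝ), |inner ℝ (U t f) g| ≤ |inner ℝ h g| / 2 := by
      apply h𝒰
      filter_upwards [eventually_ge_atTop (c0 - c)] with t ht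
      have h1 : U t w ∈ W c := hWm (by linarith) (hUW t c0 w hw)
      have h2 : inner ℝ (U t f) g = inner ℝ (U t (f - w)) g := by
        rw [map_sub, inner_sub_left, (Submodule.mem_orthogonal _ _).1 hg _ h1, sub_zero]
      rw [h2]
      calc |inner ℝ (U t (f - w)) g| ≤ ‖U t (f - w)‖ * ‖g‖ := abs_real_inner_le_norm _ _
        _ ≤ (|inner ℝ h g| / 2 / ‖g‖) * ‖g‖ := by
            rw [LinearIsometry.norm_map]; gcongr
        _ = |inner ℝ h g| / 2 := by field_simp
    have := le_of_tendsto (hh g).abs hev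
    linarith
  obtain ⟨h, hh⟩ := exists_wlim 𝒰 (fun t => U t f) ‖f‖ (fun t => by simp)
  obtain ⟨h', hh'⟩ := exists_wlim 𝒰 (fun t => U (-t) h) ‖h‖ (fun t => by simp)
  have hV := key f h hh
  have hV' : ∀ c, h' ∈ W c := by
    intro c
    haveI : CompleteSpace (W c) := (hWc c).completeSpace_coe
    rw [← Submodule.orthogonal_orthogonal (W c), Submodule.mem_orthogonal]
    intro g hg
    rw [real_inner_comm]
    refine tendsto_nhds_unique (hh' g) ?_
    have : ∀ t, inner ℝ (U (-t) h) g = 0 := fun t => by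
      refine (Submodule.mem_orthogonal _ _).1 hg _ ?_
      have := hUW (-t) (c - t) h (hV _)
      simpa using this
    simp [this]
  have hK' : ∀ c, K h' ∈ W c := by
    refine key (K h) (K h') fun g => ?_
    have := hh' (K g)
    rw [← hK] at this
    refine this.congr fun t => ?_
    rw [← hK, hKU, neg_neg]
  obtain ⟨a, ha⟩ := herg h' hV' hK'
  have hee : inner ℝ e e = 1 := by rw [real_inner_self_eq_norm_sq, he]; norm_num
  have e1 : inner ℝ h' f = inner ℝ h h := by
    refine tendsto_nhds_unique (hh' f) ?_
    have := hh h
    refine this.congr fun t => ?_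
    rw [hU, real_inner_comm]
  have e2 : inner ℝ h' e = inner ℝ h e := by
    refine tendsto_nhds_unique (hh' e) ?_
    simp [hU, hUe]
  have e3 : inner ℝ h e = inner ℝ f e := by
    refine tendsto_nhds_unique (hh e) ?_
    simp [hU, hUe]
  have hae : a = inner ℝ f e := by
    rw [← e3, ← e2, ha, real_inner_smul_left, hee, mul_one]
  have hh2 : h = (inner ℝ f e) • e := by
    rw [← sub_eq_zero, ← inner_self_eq_zero (𝕜 := ℝ)]
    rw [ha, real_inner_smul_left] at e1
    rw [inner_sub_left, inner_sub_right, inner_sub_right, ← e1, real_inner_smul_left,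
      real_inner_smul_left, real_inner_smul_right, real_inner_smul_right, real_inner_comm h e, e3,
      hee, hae, real_inner_comm e f]
    ring
  have := hh g
  rwa [hh2, real_inner_smul_left] at this

end Hilbert
end SF

namespace SF

lemma ae_const_of_dense_periods_aux (f : ℝ → ℝ) (hf : Measurable f) (C : ℝ) (hb : ∀ x, |f x| ≤ C)
    (hP : Dense {p : ℝ | ∀ᵐ s, f (s + p) = f s}) : ∃ c, ∀ᵐ s, f s = c := by
  have hloc : LocallyIntegrable f volume := by
    refine (locallyIntegrable_const C).mono hf.aestronglyMeasurable (ae_of_all _ fun x => ?_)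
    exact (hb x).trans (le_abs_self C)
  have hInt : ∀ a b, IntervalIntegrable f volume a b := fun a b =>
    (hloc.integrableOn_isCompact isCompact_uIcc).intervalIntegrable
  let A : ℝ → ℝ := fun t => ∫ s in (0:ℝ)..t, f s
  have hA : Continuous A := intervalIntegral.continuous_primitive hInt 0
  have hadd : ∀ p t, A (t + p) = A t + A p := by
    intro p t
    have hcl : IsClosed {p : ℝ | A (t + p) = A t + A p} :=
      isClosed_eq (by fun_prop) (by fun_prop)
    have : {p : ℝ | A (t + p) = A t + A p} = univ := by
      refine hcl.closure_eq ▸ (hP.mono ?_).closure_eq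
      intro p hp
      have hp : ∀ᵐ s, f (s + p) = f s := hp
      have h1 : ∫ s in p..(t+p), f s = ∫ s in (0:ℝ)..t, f s := by
        have := intervalIntegral.integral_comp_add_right (a := 0) (b := t) f p
        rw [zero_add] at this
        rw [← this]
        exact intervalIntegral.integral_congr_ae (hp.mono fun s hs _ => hs)
      have h2 := intervalIntegral.integral_add_adjacent_intervals (hInt 0 p) (hInt p (t+p))
      change A (t + p) = A t + A p
      change _ = A (t + p) at h2
      rw [← h2, h1]
      exact add_comm _ _
    exact (this ▸ mem_univ p : p ∈ {p : ℝ | A (t + p) = A t + A p})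
  let Ah : ℝ →+ ℝ := AddMonoidHom.mk' A (fun a b => hadd b a)
  have hlin : ∀ t, A t = t * A 1 := fun t => by
    have := map_real_smul Ah hA t 1
    simpa [Ah] using this
  refine ⟨A 1, ?_⟩
  filter_upwards [LocallyIntegrable.ae_hasDerivAt_integral hloc] with x hx
  have h1 : HasDerivAt A (f x) x := hx 0
  have h2 : HasDerivAt A (A 1) x := by
    have : A = fun t => t * A 1 := funext hlin
    rw [this]
    simpa using (hasDerivAt_id x).mul_const (A 1)
  exact h1.unique h2

lemma ae_const_of_dense_periods (f : ℝ → ℝ) (hf : Measurable f)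
    (hP : Dense {p : ℝ | ∀ᵐ s, f (s + p) = f s}) : ∃ c, ∀ᵐ s, f s = c := by
  obtain ⟨c, hc⟩ := ae_const_of_dense_periods_aux (fun x => Real.arctan (f x))
    (Real.measurable_arctan.comp hf) (Real.pi / 2) (fun x => by
      rw [abs_le]
      exact ⟨(Real.neg_pi_div_two_lt_arctan _).le, (Real.arctan_lt_pi_div_two _).le⟩)
    (hP.mono fun p hp => by
      have hp : ∀ᵐ s, f (s + p) = f s := hp
      exact hp.mono fun s hs => by simp [hs])
  refine ⟨Real.tan c, hc.mono fun s hs => ?_⟩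
  rw [← hs, Real.tan_arctan]

section Fund
variable {X : Type*}

/-- `E` meets each orbit of `R` exactly once. -/
def IsFund (R : Equiv.Perm X) (E : Set X) : Prop := ∀ q, ∃! n : ℤ, (R ^ n) q ∈ E

/-- The reduction to the fundamental domain. -/
noncomputable def red {R : Equiv.Perm X} {E : Set X} (h : IsFund R E) (q : X) : X :=
  (R ^ (h q).exists.choose) q

variable {R : Equiv.Perm X} {E : Set X}

lemma red_mem (h : IsFund R E) (q : X) : red h q ∈ E := (h q).exists.choose_spec

lemma red_eq (h : IsFund R E) {q : X} {n : ℤ} (hn : (R ^ n) q ∈ E) : red h q = (R ^ n) q := by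
  have := (h q).unique (h q).exists.choose_spec hn
  rw [red, this]

lemma red_of_mem (h : IsFund R E) {q : X} (hq : q ∈ E) : red h q = q := by
  have := red_eq h (q := q) (n := 0) (by simpa using hq)
  simpa using this

lemma red_exists (h : IsFund R E) (q : X) : ∃ n : ℤ, red h q = (R ^ n) q := ⟨_, rfl⟩

lemma red_zpow (h : IsFund R E) (q : X) (n : ℤ) : red h ((R ^ n) q) = red h q := by
  obtain ⟨m, hm⟩ := red_exists h q
  have h1 : (R ^ (m - n)) ((R ^ n) q) = (R ^ m) q := by
    rw [← Equiv.Perm.mul_apply, ← zpow_add, sub_add_cancel]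
  have h2 := red_eq h (q := (R ^ n) q) (n := m - n) (by rw [h1, ← hm]; exact red_mem h q)
  rw [h2, h1, hm]

lemma red_red (h : IsFund R E) (q : X) : red h (red h q) = red h q := red_of_mem h (red_mem h q)

lemma red_preimage (h : IsFund R E) (S : Set X) : red h ⁻¹' S = ⋃ n : ℤ, (R ^ n : Equiv.Perm X) ⁻¹' (E ∩ S) := by
  ext q
  simp only [mem_preimage, mem_iUnion, mem_inter_iff]
  constructor
  · intro hq
    obtain ⟨n, hn⟩ := red_exists h q
    exact ⟨n, hn ▸ red_mem h q, hn ▸ hq⟩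
  · rintro ⟨n, hn, hn'⟩
    rwa [red_eq h hn]

variable [MeasurableSpace X]

lemma measurable_zpow (hR : Measurable R) (hR' : Measurable R.symm) (n : ℤ) :
    Measurable (R ^ n : Equiv.Perm X) := by
  have key : ∀ (S : Equiv.Perm X), Measurable S → ∀ n : ℕ, Measurable (S ^ n : Equiv.Perm X) := by
    intro S hS n
    rw [Equiv.Perm.coe_pow]
    exact hS.iterate n
  cases n with
  | ofNat n => simpa using key R hR n
  | negSucc n =>
    rw [zpow_negSucc, ← inv_pow]
    exact key R⁻¹ hR' (n + 1)

lemma mp_zpow {μ : Measure X} (hR : MeasurePreserving R μ μ) (hR' : Measurable R.symm) (n : ℤ) :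
    MeasurePreserving (R ^ n : Equiv.Perm X) μ μ := by
  have key : ∀ (S : Equiv.Perm X), MeasurePreserving S μ μ → ∀ n : ℕ,
      MeasurePreserving (S ^ n : Equiv.Perm X) μ μ := by
    intro S hS n
    rw [Equiv.Perm.coe_pow]
    exact hS.iterate n
  cases n with
  | ofNat n => simpa using key R hR n
  | negSucc n =>
    rw [zpow_negSucc, ← inv_pow]
    refine key R⁻¹ ?_ (n + 1)
    let Re : X ≃ᵐ X := ⟨R, hR.measurable, hR'⟩
    exact MeasurePreserving.symm Re hR

lemma measurable_red (h : IsFund R E) (hR : Measurable R) (hR' : Measurable R.symm) (hE : MeasurableSet E) :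
    Measurable (red h) := by
  intro S hS
  rw [red_preimage h]
  exact MeasurableSet.iUnion fun n => measurable_zpow hR hR' n (hE.inter hS)

lemma red_null (h : IsFund R E) {μ : Measure X} (hR : MeasurePreserving R μ μ) (hR' : Measurable R.symm)
    (hE : MeasurableSet E) {S : Set X} (hS : MeasurableSet S) (h0 : μ (E ∩ S) = 0) :
    μ (red h ⁻¹' S) = 0 := by
  rw [red_preimage h, measure_iUnion_null_iff]
  intro n
  rw [(mp_zpow hR hR' n).measure_preimage (hE.inter hS).nullMeasurableSet, h0]

lemma lintegral_fund (h : IsFund R E) {μ : Measure X} (hR : MeasurePreserving R μ μ) (hR' : Measurable R.symm)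
    (hE : MeasurableSet E) {E' : Set X} (hE' : MeasurableSet E') (h' : IsFund R E')
    (F : X → ENNReal) (hF : Measurable F) (hFR : ∀ q (n : ℤ), F ((R ^ n) q) = F q) :
    ∫⁻ q in E, F q ∂μ = ∫⁻ q in E', F q ∂μ := by
  have key : ∀ (E E' : Set X), MeasurableSet E → MeasurableSet E' → IsFund R E' →
      ∫⁻ q in E, F q ∂μ = ∑' n : ℤ, ∫⁻ q in E ∩ (R ^ n : Equiv.Perm X) ⁻¹' E', F q ∂μ := by
    intro E E' hE hE' h'
    have : E = ⋃ n : ℤ, E ∩ (R ^ n : Equiv.Perm X) ⁻¹' E' := by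
      rw [← inter_iUnion]
      refine (inter_eq_left.2 fun q _ => ?_).symm
      obtain ⟨n, hn, -⟩ := h' q
      exact mem_iUnion.2 ⟨n, hn⟩
    conv_lhs => rw [this]
    refine lintegral_iUnion (fun n => hE.inter (measurable_zpow hR.measurable hR' n hE')) ?_ _
    intro m n hmn
    refine Set.disjoint_left.2 fun q hq hq' => hmn ?_
    exact (h' q).unique hq.2 hq'.2
  rw [key E E' hE hE' h', key E' E hE' hE h, ← (Equiv.neg ℤ).tsum_eq]
  refine tsum_congr fun n => ?_
  have hmp := mp_zpow hR hR' n
  have hS : MeasurableSet (E ∩ (R ^ (-n) : Equiv.Perm X) ⁻¹' E') :=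
    hE.inter (measurable_zpow hR.measurable hR' _ hE')
  have h1 := hmp.setLIntegral_comp_preimage hS hF
  simp only [Equiv.neg_apply]
  rw [← h1]
  simp only [hFR]
  congr 2
  ext q
  simp only [mem_inter_iff, mem_preimage, zpow_neg, ← Equiv.Perm.mul_apply, inv_mul_cancel, Equiv.Perm.one_apply]
  exact and_comm

/-- A measure preserving bijection normalizing `R` induces a measure preserving map. -/
lemma mp_red (h : IsFund R E) {μ : Measure X} (hR : MeasurePreserving R μ μ) (hR' : Measurable R.symm)
    (hE : MeasurableSet E) (T : Equiv.Perm X) (hT : MeasurePreserving T μ μ)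
    (hT' : Measurable T.symm) (η : ℤ) (hη : η * η = 1)
    (hTR : ∀ q (n : ℤ), T ((R ^ n) q) = (R ^ (η * n)) (T q)) (c : ENNReal) :
    MeasurePreserving (fun q => red h (T q)) (c • μ.restrict E) (c • μ.restrict E) := by
  have hm : Measurable (red h) := measurable_red h hR.measurable hR' hE
  suffices MeasurePreserving (fun q => red h (T q)) (μ.restrict E) (μ.restrict E) from
    ⟨this.measurable, by rw [Measure.map_smul, this.map_eq]⟩
  refine ⟨hm.comp hT.measurable, ?_⟩
  have hTs : ∀ q (n : ℤ), T.symm ((R ^ n) q) = (R ^ (η * n)) (T.symm q) := by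
    intro q n
    rw [Equiv.symm_apply_eq, hTR, ← mul_assoc, hη, one_mul, Equiv.apply_symm_apply]
  have h' : IsFund R (T.symm ⁻¹' E) := by
    intro q
    obtain ⟨n, hn, hu⟩ := h (T.symm q)
    refine ⟨η * n, ?_, fun m hm => ?_⟩
    · simp only [mem_preimage]
      rw [hTs, ← mul_assoc, hη, one_mul]; exact hn
    · simp only [mem_preimage] at hm
      rw [hTs] at hm
      rw [← hu _ hm, ← mul_assoc, hη, one_mul]
  ext S hS
  have hmT : Measurable (fun q => red h (T q)) := hm.comp hT.measurable
  rw [Measure.map_apply hmT hS]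
  have e1 : ∀ F : X → ENNReal, Measurable F →
      ∫⁻ q in E, F (T q) ∂μ = ∫⁻ q in T.symm ⁻¹' E, F q ∂μ := by
    intro F hF
    rw [← hT.setLIntegral_comp_preimage (hT' hE) hF]
    congr 2
    ext q; simp
  have hF : Measurable (fun q => S.indicator (1 : X → ENNReal) (red h q)) :=
    (measurable_one.indicator hS).comp hm
  have h2 := e1 _ hF
  rw [← lintegral_fund h hR hR' hE (hT' hE) h' _ hF (fun q n => by rw [red_zpow])] at h2
  have h3 : ∫⁻ q in E, S.indicator (1 : X → ENNReal) (red h q) ∂μ =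
      ∫⁻ q in E, S.indicator (1 : X → ENNReal) q ∂μ := by
    refine setLIntegral_congr_fun hE fun q hq => ?_
    simp only [red_of_mem h hq]
  rw [h3, lintegral_indicator_one hS] at h2
  rw [← h2, ← lintegral_indicator_one (hmT hS)]
  rfl

end Fund

section Weq
variable {X Q : Type*} [MeasurableSpace X] [MeasurableSpace Q]

/-- The functions `f` in `L²` with `f ∘ α = f ∘ β` almost everywhere. -/
noncomputable def Weq (ν : Measure X) (m : Measure Q) (α β : Q → X)
    (hα : Measure.QuasiMeasurePreserving α m ν) (hβ : Measure.QuasiMeasurePreserving β m ν) :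
    Submodule ℝ (Lp ℝ 2 ν) where
  carrier := {f | ∀ᵐ q ∂m, f (α q) = f (β q)}
  add_mem' := by
    intro f g hf hg
    have hf : ∀ᵐ q ∂m, f (α q) = f (β q) := hf
    have hg : ∀ᵐ q ∂m, g (α q) = g (β q) := hg
    change ∀ᵐ q ∂m, _
    filter_upwards [hf, hg, hα.ae (Lp.coeFn_add f g), hβ.ae (Lp.coeFn_add f g)]
      with q h1 h2 h3 h4
    rw [h3, h4, Pi.add_apply, Pi.add_apply, h1, h2]
  zero_mem' := by
    change ∀ᵐ q ∂m, _
    filter_upwards [hα.ae (Lp.coeFn_zero ℝ 2 ν), hβ.ae (Lp.coeFn_zero ℝ 2 ν)] with q h3 h4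
    rw [h3, h4]; rfl
  smul_mem' := by
    intro c f hf
    have hf : ∀ᵐ q ∂m, f (α q) = f (β q) := hf
    change ∀ᵐ q ∂m, _
    filter_upwards [hf, hα.ae (Lp.coeFn_smul c f), hβ.ae (Lp.coeFn_smul c f)] with q h1 h3 h4
    rw [h3, h4, Pi.smul_apply, Pi.smul_apply, h1]

lemma isClosed_Weq (ν : Measure X) (m : Measure Q) (α β : Q → X)
    (hα : Measure.QuasiMeasurePreserving α m ν) (hβ : Measure.QuasiMeasurePreserving β m ν) :
    IsClosed (Weq ν m α β hα hβ : Set (Lp ℝ 2 ν)) := by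
  refine IsSeqClosed.isClosed fun u f hu hf => ?_
  obtain ⟨ns, -, hns⟩ := (tendstoInMeasure_of_tendsto_Lp hf).exists_seq_tendsto_ae
  change ∀ᵐ q ∂m, _
  have hu' : ∀ᵐ q ∂m, ∀ n, u n (α q) = u n (β q) := ae_all_iff.2 fun n => hu n
  filter_upwards [hα.ae hns, hβ.ae hns, hu'] with q h1 h2 h3
  refine tendsto_nhds_unique h1 ?_
  simpa only [h3] using h2

end Weq
end SF

namespace SF

/-- The irrational numbers of the unit interval. -/
def Iset : Set ℝ := {x | x ∈ Ioo (0 : ℝ) 1 ∧ Irrational x}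

/-- The irrational numbers of the unit interval, as a type. -/
abbrev I : Type := Iset

lemma measurableSet_Iset : MeasurableSet Iset := by
  refine measurableSet_Ioo.inter ?_
  exact (Set.countable_range ((↑) : ℚ → ℝ)).measurableSet.compl

lemma I_pos (z : I) : 0 < (z : ℝ) := z.2.1.1
lemma I_lt (z : I) : (z : ℝ) < 1 := z.2.1.2

lemma br_aux (n : ℕ) (z : I) : 1 / ((n + 1 : ℝ) + z) ∈ Iset := by
  have h0 := I_pos z
  refine ⟨⟨by positivity, ?_⟩, ?_⟩
  · rw [div_lt_one (by positivity)]; linarith [(Nat.cast_nonneg n : (0:ℝ) ≤ n)]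
  · have := z.2.2.natCast_add (n + 1)
    rw [one_div, irrational_inv_iff]
    exact_mod_cast this

/-- The inverse branches of the Gauss map. -/
noncomputable def br (n : ℕ) (z : I) : I := ⟨1 / ((n + 1 : ℝ) + z), br_aux n z⟩

lemma br_coe (n : ℕ) (z : I) : (br n z : ℝ) = 1 / ((n + 1 : ℝ) + z) := rfl

lemma fr_aux (z : I) : Int.fract (1 / (z : ℝ)) ∈ Iset := by
  have hirr : Irrational (Int.fract (1 / (z : ℝ))) := by
    have : Irrational (1 / (z : ℝ)) := by rw [one_div, irrational_inv_iff]; exact z.2.2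
    exact this.sub_intCast _
  refine ⟨⟨lt_of_le_of_ne (Int.fract_nonneg _) ?_, Int.fract_lt_one _⟩, hirr⟩
  exact (hirr.ne_zero).symm

/-- The Gauss map on irrationals. -/
noncomputable def fr (z : I) : I := ⟨Int.fract (1 / (z : ℝ)), fr_aux z⟩

/-- The first digit, minus one. -/
noncomputable def dig (z : I) : ℕ := ⌊1 / (z : ℝ)⌋₊ - 1

lemma one_lt_inv (z : I) : 1 < 1 / (z : ℝ) := by
  rw [lt_div_iff₀ (I_pos z)]; linarith [I_lt z]

lemma dig_floor (z : I) : ((dig z : ℝ) + 1) = (⌊1 / (z : ℝ)⌋ : ℝ) := by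
  have h1 : 1 ≤ ⌊1 / (z : ℝ)⌋₊ := Nat.le_floor (by simpa using (one_lt_inv z).le)
  have h2 : ((⌊1 / (z : ℝ)⌋₊ : ℝ)) = (⌊1 / (z : ℝ)⌋ : ℝ) :=
    natCast_floor_eq_intCast_floor (by linarith [one_lt_inv z])
  rw [← h2, dig, Nat.cast_sub h1]; simp

lemma dig_fr (z : I) : ((dig z : ℝ) + 1) + fr z = 1 / (z : ℝ) := by
  rw [dig_floor]; exact Int.floor_add_fract _

lemma br_dig_fr (z : I) : br (dig z) (fr z) = z := by
  apply Subtype.ext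
  rw [br_coe, dig_fr, one_div_one_div]

lemma dig_br (n : ℕ) (z : I) : dig (br n z) = n := by
  rw [dig, br_coe, one_div_one_div]
  have : ⌊(n + 1 : ℝ) + z⌋₊ = n + 1 := by
    rw [Nat.floor_eq_iff (by have := I_pos z; positivity)]
    have := I_pos z; have := I_lt z
    push_cast; constructor <;> linarith
  rw [this]; simp

lemma fr_br (n : ℕ) (z : I) : fr (br n z) = z := by
  apply Subtype.ext
  change Int.fract (1 / (br n z : ℝ)) = z
  rw [br_coe, one_div_one_div]
  rw [Int.fract_eq_iff]
  refine ⟨(I_pos z).le, I_lt z, n + 1, ?_⟩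
  push_cast; ring

lemma measurable_br (n : ℕ) : Measurable (br n) := by
  refine Measurable.subtype_mk ?_
  fun_prop

lemma measurable_dig : Measurable dig := by
  have : Measurable fun z : I => ⌊1 / (z : ℝ)⌋₊ := by fun_prop
  exact (measurable_of_countable (fun n : ℕ => n - 1)).comp this

lemma measurable_fr : Measurable fr := by
  refine Measurable.subtype_mk ?_
  have : Measurable fun z : I => 1 / (z : ℝ) := by fun_prop
  exact measurable_fract.comp this

lemma measurable_br2 : Measurable (fun p : I × I => br (dig p.2) p.1) := by
  refine Measurable.subtype_mk ?_
  have h : Measurable fun p : I × I => (dig p.2 : ℝ) :=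
    (measurable_of_countable (fun n : ℕ => (n : ℝ))).comp (measurable_dig.comp measurable_snd)
  fun_prop

noncomputable instance : MeasureSpace I := Measure.Subtype.measureSpace

instance : IsFiniteMeasure (volume : Measure I) := by
  constructor
  have h := Measure.Subtype.volume_univ (u := Iset) measurableSet_Iset.nullMeasurableSet
  rw [h]
  refine (measure_mono (t := Ioo (0:ℝ) 1) fun x hx => hx.1).trans_lt ?_
  simp

lemma volume_Iset : volume Iset = 1 := by
  have h1 : Iset = Ioo (0:ℝ) 1 \ Set.range ((↑) : ℚ → ℝ) := rfl
  rw [h1, measure_sdiff_null ((Set.countable_range ((↑) : ℚ → ℝ)).measure_zero _)]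
  simp

instance : NeZero (volume : Measure I) := by
  constructor
  intro h
  have h' := Measure.Subtype.volume_univ (u := Iset) measurableSet_Iset.nullMeasurableSet
  rw [h, volume_Iset] at h'
  simp at h'

lemma countable_null {S : Set I} (hS : S.Countable) : volume S = 0 := by
  have := comap_subtype_coe_apply measurableSet_Iset (volume : Measure ℝ) S
  change (Measure.comap Subtype.val volume) S = 0
  rw [this]
  exact (hS.image _).measure_zero _

/-- Jacobian of the inverse branch. -/
noncomputable def jac (n : ℕ) (z : I) : ENNReal := ENNReal.ofReal (1 / ((n + 1 : ℝ) + z) ^ 2)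

lemma measurable_jac (n : ℕ) : Measurable (jac n) := by unfold jac; fun_prop

lemma lintegral_br (f : I → ENNReal) (hf : Measurable f) :
    ∫⁻ y, f y = ∑' n : ℕ, ∫⁻ y, jac n y * f (br n y) := by
  classical
  let g : ℝ → ENNReal := fun t => if h : t ∈ Iset then f ⟨t, h⟩ else 0
  have hg : ∀ z : I, f z = g z := fun z => by simp [g]
  have hU : (univ : Set I) = ⋃ n : ℕ, dig ⁻¹' {n} := by
    ext z; simp
  have h1 : ∫⁻ y, f y = ∑' n : ℕ, ∫⁻ y in dig ⁻¹' {n}, f y := by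
    rw [← setLIntegral_univ, hU]
    refine lintegral_iUnion (fun n => measurable_dig (measurableSet_singleton n)) ?_ _
    intro m n hmn
    refine Set.disjoint_left.2 fun q hq hq' => hmn ?_
    exact hq.symm.trans hq'
  rw [h1]
  refine tsum_congr fun n => ?_
  have h2 : ∫⁻ y in dig ⁻¹' {n}, f y = ∫⁻ t in ((↑) : I → ℝ) '' (dig ⁻¹' {n}), g t := by
    simp only [hg]
    exact setLIntegral_subtype measurableSet_Iset _ g
  have h3 : ((↑) : I → ℝ) '' (dig ⁻¹' {n}) = (fun t : ℝ => 1 / ((n + 1 : ℝ) + t)) '' Iset := by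
    ext t
    constructor
    · rintro ⟨z, hz, rfl⟩
      refine ⟨fr z, (fr z).2, ?_⟩
      have hz : dig z = n := hz
      have := congrArg Subtype.val (br_dig_fr z)
      rw [hz] at this
      exact this
    · rintro ⟨z, hz, rfl⟩
      exact ⟨br n ⟨z, hz⟩, dig_br _ _, rfl⟩
  have hpos : ∀ t ∈ Iset, (n + 1 : ℝ) + t ≠ 0 := fun t ht => by
    have := ht.1.1; positivity
  have h4 := lintegral_image_eq_lintegral_abs_deriv_mul (s := Iset)
    (f := fun t : ℝ => 1 / ((n + 1 : ℝ) + t)) (f' := fun t => -1 / ((n + 1 : ℝ) + t) ^ 2)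
    measurableSet_Iset (fun t ht => by
      have := ((hasDerivAt_id t).const_add (n + 1 : ℝ)).inv (hpos t ht)
      simpa [one_div] using! this.hasDerivWithinAt)
    (fun t ht t' ht' h => by
      have h : 1 / ((n + 1 : ℝ) + t) = 1 / ((n + 1 : ℝ) + t') := h
      rw [one_div, one_div, inv_inj] at h
      linarith) g
  rw [h2, h3, h4]
  have h5 := lintegral_subtype_comap measurableSet_Iset
    (fun t : ℝ => ENNReal.ofReal |-1 / ((n + 1 : ℝ) + t) ^ 2| * g (1 / ((n + 1 : ℝ) + t)))
    (μ := volume)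
  rw [← h5]
  refine lintegral_congr fun z => ?_
  have e1 : |-1 / ((n + 1 : ℝ) + z) ^ 2| = 1 / ((n + 1 : ℝ) + z) ^ 2 := by
    rw [abs_div, abs_neg, abs_one, abs_of_nonneg (sq_nonneg _)]
  rw [e1, hg]
  rfl

/-- The density. -/
noncomputable def rho (p : I × I) : ENNReal :=
  ENNReal.ofReal (1 / (Real.log 2 * (1 + (p.1 : ℝ) * p.2) ^ 2))

lemma measurable_rho : Measurable rho := by unfold rho; fun_prop

/-- The invariant measure of the natural extension. -/
noncomputable def muD : Measure (I × I) := volume.withDensity rho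

lemma lintegral_muD (F : I × I → ENNReal) (hF : Measurable F) :
    ∫⁻ p, F p ∂muD = ∫⁻ x, ∫⁻ y, rho (x, y) * F (x, y) := by
  rw [muD, lintegral_withDensity_eq_lintegral_mul _ measurable_rho hF, Measure.volume_eq_prod,
    lintegral_prod _ (measurable_rho.mul hF).aemeasurable]
  rfl

/-- The natural extension. -/
noncomputable def Gh (p : I × I) : I × I := (br (dig p.2) p.1, fr p.2)

lemma measurable_Gh : Measurable Gh :=
  measurable_br2.prodMk (measurable_fr.comp measurable_snd)

lemma jac_rho (n : ℕ) (x y : I) : jac n y * rho (x, br n y) = jac n x * rho (br n x, y) := by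
  have hx := I_pos x; have hy := I_pos y
  unfold jac rho
  rw [← ENNReal.ofReal_mul (by positivity), ← ENNReal.ofReal_mul (by positivity)]
  congr 1
  simp only [br_coe]
  have : Real.log 2 ≠ 0 := (Real.log_pos (by norm_num)).ne'
  field_simp
  ring

lemma mp_Gh : MeasurePreserving Gh muD muD := by
  refine ⟨measurable_Gh, ?_⟩
  refine Measure.ext_of_lintegral _ fun F hF => ?_
  rw [lintegral_map hF measurable_Gh, lintegral_muD (fun p => F (Gh p)) (hF.comp measurable_Gh), lintegral_muD _ hF]
  have hbr : ∀ n, Measurable (br n) := measurable_br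
  have hj := measurable_jac
  have hρ := measurable_rho
  have hG := measurable_Gh
  have h1 : ∀ x : I, ∫⁻ y, rho (x, y) * F (Gh (x, y)) =
      ∑' n : ℕ, ∫⁻ y, jac n y * (rho (x, br n y) * F (br n x, y)) := by
    intro x
    rw [lintegral_br _ (by fun_prop)]
    simp only [Gh, dig_br, fr_br]
  simp only [h1]
  rw [lintegral_tsum (fun n => by
    refine Measurable.aemeasurable (Measurable.lintegral_prod_right' (f := fun p : I × I =>
      jac n p.2 * (rho (p.1, br n p.2) * F (br n p.1, p.2))) ?_)
    have := hj n; have := hbr n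
    fun_prop)]
  rw [lintegral_br _ (Measurable.lintegral_prod_right' (f := fun p : I × I => rho p * F p)
    (by fun_prop))]
  refine tsum_congr fun n => lintegral_congr fun x => ?_
  have := hbr n
  rw [← lintegral_const_mul _ (by fun_prop)]
  refine lintegral_congr fun y => ?_
  rw [← mul_assoc, ← mul_assoc, jac_rho]

end SF

namespace SF

lemma isFund_of_height {X : Type*} (R : Equiv.Perm X) (ψ : X → ℝ) (δ : ℝ) (hδ : 0 < δ)
    (h1 : ∀ q, ψ (R q) < ψ q) (h2 : ∀ q, ψ (R (R q)) ≤ ψ q - δ) (c : ℝ) :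
    IsFund R {q | c ≤ ψ q ∧ ψ (R q) < c} := by
  intro q
  have hsucc : ∀ n : ℤ, (R ^ (n + 1)) q = R ((R ^ n) q) := fun n => by
    rw [add_comm, zpow_add, zpow_one]; rfl
  have hanti : StrictAnti (fun n : ℤ => ψ ((R ^ n) q)) := by
    refine strictAnti_int_of_succ_lt fun n => ?_
    rw [hsucc]; exact h1 _
  have hup : ∀ (k : ℕ) (q : X), ψ ((R ^ (2 * (k : ℤ))) q) ≤ ψ q - k * δ := by
    intro k
    induction k with
    | zero => intro q; simp
    | succ k ih =>
      intro q
      have : (R ^ (2 * ((k + 1 : ℕ) : ℤ))) q = (R ^ (2 * (k : ℤ))) (R (R q)) := by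
        push_cast
        rw [mul_add, zpow_add]; rfl
      rw [this]
      have := ih (R (R q)); have := h2 q
      push_cast; linarith
  obtain ⟨k, hk⟩ := exists_nat_gt ((ψ q - c) / δ)
  obtain ⟨l, hl⟩ := exists_nat_gt ((c - ψ q) / δ)
  rw [div_lt_iff₀ hδ] at hk hl
  have hb := hup k q
  have ha := hup l ((R ^ (-(2 * (l : ℤ)))) q)
  rw [← Equiv.Perm.mul_apply, ← zpow_add, add_neg_cancel, zpow_zero, Equiv.Perm.one_apply] at ha
  obtain ⟨n, hn, hmax⟩ := Int.exists_greatest_of_bdd (P := fun n => c ≤ ψ ((R ^ n) q))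
    ⟨2 * k, fun z hz => by
      by_contra hlt
      push Not at hlt
      have := hanti hlt
      simp only at this
      linarith⟩ ⟨-(2 * (l : ℤ)), by linarith⟩
  refine ⟨n, ⟨hn, ?_⟩, ?_⟩
  · rw [← hsucc]
    by_contra hge
    have := hmax (n + 1) (not_lt.1 hge)
    omega
  · rintro m ⟨hm1, hm2⟩
    refine le_antisymm (hmax m hm1) ?_
    by_contra hlt
    push Not at hlt
    rw [← hsucc] at hm2
    have : ψ ((R ^ n) q) ≤ ψ ((R ^ (m + 1)) q) := hanti.antitone (by omega : m + 1 ≤ n)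
    linarith

/-- The space on which the suspension is a quotient. -/
abbrev X : Type := (I × I) × ℝ

lemma sum_eq (x y : I) : ((dig y : ℝ) + 1) + x = 1 / (br (dig y) x : ℝ) := by
  rw [br_coe, one_div_one_div]

/-- The deck transformation. -/
noncomputable def R : Equiv.Perm X where
  toFun q := ((br (dig q.1.2) q.1.1, fr q.1.2), q.2 + Real.log (br (dig q.1.2) q.1.1))
  invFun q := ((fr q.1.1, br (dig q.1.1) q.1.2), q.2 - Real.log q.1.1)
  left_inv q := by
    obtain ⟨⟨x, y⟩, s⟩ := q
    simp [fr_br, dig_br, br_dig_fr]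
  right_inv q := by
    obtain ⟨⟨x, y⟩, s⟩ := q
    simp [fr_br, dig_br, br_dig_fr]

lemma R_apply (x y : I) (s : ℝ) :
    R ((x, y), s) = ((br (dig y) x, fr y), s + Real.log (br (dig y) x)) := rfl

lemma R_symm_apply (x y : I) (s : ℝ) :
    R.symm ((x, y), s) = ((fr x, br (dig x) y), s - Real.log x) := rfl

/-- The translation flow. -/
def T (t : ℝ) : Equiv.Perm X where
  toFun q := (q.1, q.2 + t)
  invFun q := (q.1, q.2 - t)
  left_inv q := by simp
  right_inv q := by simp

lemma T_apply (t : ℝ) (q : X) : T t q = (q.1, q.2 + t) := rfl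

/-- Time reversal. -/
noncomputable def J : Equiv.Perm X where
  toFun q := ((q.1.2, q.1.1), Real.log (1 + q.1.1 * q.1.2) - q.2)
  invFun q := ((q.1.2, q.1.1), Real.log (1 + q.1.1 * q.1.2) - q.2)
  left_inv q := by
    obtain ⟨⟨x, y⟩, s⟩ := q
    simp [mul_comm]
  right_inv q := by
    obtain ⟨⟨x, y⟩, s⟩ := q
    simp [mul_comm]

lemma J_apply (x y : I) (s : ℝ) : J ((x, y), s) = ((y, x), Real.log (1 + x * y) - s) := rfl

lemma J_symm : J.symm = J := rfl

lemma J_J (q : X) : J (J q) = q := J.left_inv q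

/-- The stable height. -/
noncomputable def uh (q : X) : ℝ := q.2 - Real.log (1 + q.1.1 * q.1.2)

/-- Sliding along the stable leaf. -/
noncomputable def tau (x' : I) (q : X) : X :=
  ((x', q.1.2), q.2 - Real.log (1 + q.1.1 * q.1.2) + Real.log (1 + x' * q.1.2))

lemma log_I_neg (x : I) : Real.log x < 0 := Real.log_neg (I_pos x) (I_lt x)

lemma height_R (q : X) : (R q).2 < q.2 := by
  have := log_I_neg (br (dig q.1.2) q.1.1)
  change q.2 + _ < _
  linarith

lemma br_mul_le (n m : ℕ) (x : I) : (br n x : ℝ) * br m (br n x) ≤ 1 / 2 := by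
  have hx := I_pos x
  rw [br_coe m, br_coe n]
  have hn : (0:ℝ) ≤ n := Nat.cast_nonneg n
  have hm : (0:ℝ) ≤ m := Nat.cast_nonneg m
  rw [div_mul_div_comm, one_mul]
  apply one_div_le_one_div_of_le (by norm_num)
  have : ((n:ℝ) + 1 + x) * (m + 1 + 1 / (n + 1 + x)) = (n + 1 + x) * (m + 1) + 1 := by
    field_simp
  rw [this]
  nlinarith

lemma height_RR (q : X) : (R (R q)).2 ≤ q.2 - Real.log 2 := by
  obtain ⟨⟨x, y⟩, s⟩ := q
  rw [R_apply, R_apply]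
  simp only
  set n := dig y
  set m := dig (fr y)
  have h := br_mul_le n m x
  have h1 := I_pos (br n x); have h2 := I_pos (br m (br n x))
  have := Real.log_le_log (by positivity) h
  rw [Real.log_mul h1.ne' h2.ne', one_div, Real.log_inv] at this
  linarith

lemma key_id (x y : I) : (1 + (br (dig y) x : ℝ) * fr y) * y = (1 + x * y) * br (dig y) x := by
  have h1 := sum_eq x y
  have h2 := dig_fr y
  have hb := I_pos (br (dig y) x); have hy := I_pos y
  have h3 : (fr y : ℝ) = 1 / y - (1 / (br (dig y) x : ℝ) - x) := by linarith
  rw [h3]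
  field_simp
  ring

lemma one_add_pos (x y : I) : 0 < 1 + (x : ℝ) * y := by
  have := I_pos x; have := I_pos y; positivity

lemma uh_R (q : X) : uh (R q) = uh q + Real.log q.1.2 := by
  obtain ⟨⟨x, y⟩, s⟩ := q
  rw [R_apply, uh, uh]
  simp only
  have h := congrArg Real.log (key_id x y)
  rw [Real.log_mul (one_add_pos _ _).ne' (I_pos _).ne',
    Real.log_mul (one_add_pos _ _).ne' (I_pos _).ne'] at h
  linarith

lemma uh_R_lt (q : X) : uh (R q) < uh q := by
  rw [uh_R]; linarith [log_I_neg q.1.2]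

lemma uh_RR (q : X) : uh (R (R q)) ≤ uh q - Real.log 2 := by
  rw [uh_R, uh_R]
  obtain ⟨⟨x, y⟩, s⟩ := q
  rw [R_apply]
  simp only
  have h1 := I_pos y; have h2 := I_pos (fr y); have h3 := I_lt (fr y)
  have h : (y : ℝ) * fr y ≤ 1 / 2 := by
    have h4 := dig_fr y
    have h5 : (0:ℝ) ≤ dig y := Nat.cast_nonneg _
    have h6 : (y:ℝ) * (((dig y : ℝ) + 1) + fr y) = 1 := by rw [h4]; field_simp
    nlinarith
  have := Real.log_le_log (by positivity) h
  rw [Real.log_mul h1.ne' h2.ne', one_div, Real.log_inv] at this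
  linarith

/-- The phase space. -/
def E : Set X := {q | 0 ≤ q.2 ∧ (R q).2 < 0}

lemma fundE : IsFund R E := isFund_of_height R (fun q => q.2) (Real.log 2)
  (Real.log_pos (by norm_num)) height_R height_RR 0

/-- Stable fundamental domains. -/
def Ec (c : ℝ) : Set X := {q | c ≤ uh q ∧ uh (R q) < c}

lemma fundEc (c : ℝ) : IsFund R (Ec c) := isFund_of_height R uh (Real.log 2)
  (Real.log_pos (by norm_num)) uh_R_lt uh_RR c

lemma measurable_R : Measurable R := by
  have h : Measurable fun q : X => br (dig q.1.2) q.1.1 := measurable_br2.comp measurable_fst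
  have h2 : Measurable fun q : X => fr q.1.2 := measurable_fr.comp (by fun_prop)
  have h3 : Measurable fun q : X => Real.log (br (dig q.1.2) q.1.1) :=
    Real.measurable_log.comp (measurable_subtype_coe.comp h)
  exact (h.prodMk h2).prodMk (measurable_snd.add h3)

lemma measurable_R_symm : Measurable R.symm := by
  have h : Measurable fun q : X => br (dig q.1.1) q.1.2 := by
    refine Measurable.subtype_mk ?_
    have h : Measurable fun q : X => (dig q.1.1 : ℝ) :=
      (measurable_of_countable (fun n : ℕ => (n : ℝ))).comp
        (measurable_dig.comp (measurable_fst.comp measurable_fst))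
    fun_prop
  have h2 : Measurable fun q : X => fr q.1.1 := measurable_fr.comp (by fun_prop)
  have h3 : Measurable fun q : X => Real.log q.1.1 := by fun_prop
  exact (h2.prodMk h).prodMk (measurable_snd.sub h3)

lemma measurable_T (t : ℝ) : Measurable (T t) := by
  change Measurable fun q : X => (q.1, q.2 + t)
  fun_prop

lemma measurable_T_symm (t : ℝ) : Measurable (T t).symm := by
  change Measurable fun q : X => (q.1, q.2 - t)
  fun_prop

lemma measurable_J : Measurable J := by
  change Measurable fun q : X => ((q.1.2, q.1.1), Real.log (1 + q.1.1 * q.1.2) - q.2)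
  fun_prop

lemma measurable_uh : Measurable uh := by unfold uh; fun_prop

lemma measurable_tau : Measurable (fun p : I × X => tau p.1 p.2) := by unfold tau; fun_prop

lemma measurableSet_E : MeasurableSet E :=
  (measurableSet_le measurable_const measurable_snd).inter
    (measurableSet_lt (measurable_snd.comp measurable_R) measurable_const)

lemma measurableSet_Ec (c : ℝ) : MeasurableSet (Ec c) :=
  (measurableSet_le measurable_const measurable_uh).inter
    (measurableSet_lt (measurable_uh.comp measurable_R) measurable_const)

/-- The invariant measure upstairs. -/
noncomputable def muX : Measure X := muD.prod volume

instance : SFinite muD := by unfold muD; infer_instance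

instance : SFinite muX := by unfold muX; infer_instance

lemma mp_R : MeasurePreserving R muX muX := by
  refine MeasurePreserving.skew_product (g := fun p s => s + Real.log (br (dig p.2) p.1)) mp_Gh
    ?_ (ae_of_all _ fun p => ?_)
  · exact measurable_snd.comp measurable_R
  · exact (measurePreserving_add_right volume _).map_eq

lemma mp_T (t : ℝ) : MeasurePreserving (T t) muX muX := by
  refine MeasurePreserving.skew_product (g := fun _ s => s + t) (MeasurePreserving.id muD)
    ?_ (ae_of_all _ fun p => ?_)
  · exact measurable_snd.comp (measurable_T t)
  · exact (measurePreserving_add_right volume _).map_eq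

lemma mp_swap : MeasurePreserving (Prod.swap : I × I → I × I) muD muD := by
  refine ⟨measurable_swap, Measure.ext_of_lintegral _ fun F hF => ?_⟩
  have hρ := measurable_rho
  rw [lintegral_map hF measurable_swap, lintegral_muD (fun p => F p.swap) (by fun_prop),
    lintegral_muD _ hF, lintegral_lintegral_swap
      (f := fun x y => rho (x, y) * F (x, y)) (Measurable.aemeasurable (by fun_prop))]
  refine lintegral_congr fun x => lintegral_congr fun y => ?_
  simp [rho, mul_comm]

lemma mp_J : MeasurePreserving J muX muX := by
  refine MeasurePreserving.skew_product (g := fun p s => Real.log (1 + p.1 * p.2) - s) mp_swap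
    ?_ (ae_of_all _ fun p => ?_)
  · exact measurable_snd.comp measurable_J
  · exact (Measure.measurePreserving_sub_left volume _).map_eq

lemma T_R (t : ℝ) (q : X) : T t (R q) = R (T t q) := by
  obtain ⟨⟨x, y⟩, s⟩ := q
  simp only [R_apply, T_apply]
  congr 1
  ring

lemma R_J_R (q : X) : R (J (R q)) = J q := by
  obtain ⟨⟨x, y⟩, s⟩ := q
  simp only [R_apply, J_apply, dig_br, fr_br, br_dig_fr]
  congr 1
  have h := congrArg Real.log (key_id x y)
  rw [Real.log_mul (one_add_pos _ _).ne' (I_pos _).ne',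
    Real.log_mul (one_add_pos _ _).ne' (I_pos _).ne'] at h
  linarith

lemma T_zpow (t : ℝ) (q : X) (n : ℤ) : T t ((R ^ n) q) = (R ^ ((1 : ℤ) * n)) (T t q) := by
  rw [one_mul]
  have h : T t * R = R * T t := Equiv.ext (T_R t)
  have h2 : Commute (T t) R := h
  exact congrArg (fun S : Equiv.Perm X => S q) (h2.zpow_right n)

lemma J_zpow (q : X) (n : ℤ) : J ((R ^ n) q) = (R ^ ((-1 : ℤ) * n)) (J q) := by
  rw [neg_one_mul]
  have h : SemiconjBy J R R⁻¹ := by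
    change J * R = R⁻¹ * J
    rw [eq_inv_mul_iff_mul_eq]
    exact Equiv.ext R_J_R
  have := h.zpow_right n
  rw [inv_zpow'] at this
  exact congrArg (fun S : Equiv.Perm X => S q) this

/-- Reduction to the phase space. -/
noncomputable def pr : X → X := red fundE

lemma measurable_pr : Measurable pr :=
  measurable_red fundE measurable_R measurable_R_symm measurableSet_E

/-- The flow. -/
noncomputable def Phi (t : ℝ) (q : X) : X := pr (T t q)

/-- The induced time reversal. -/
noncomputable def Jh (q : X) : X := pr (J q)

lemma pr_T_pr (t : ℝ) (q : X) : pr (T t (pr q)) = pr (T t q) := by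
  obtain ⟨n, hn⟩ := red_exists fundE q
  rw [pr, hn, T_zpow, red_zpow]

lemma pr_J_pr (q : X) : pr (J (pr q)) = pr (J q) := by
  obtain ⟨n, hn⟩ := red_exists fundE q
  rw [pr, hn, J_zpow, red_zpow]

lemma pr_of_mem {q : X} (hq : q ∈ E) : pr q = q := red_of_mem fundE hq

lemma J_T (t : ℝ) (q : X) : J (T t q) = T (-t) (J q) := by
  obtain ⟨⟨x, y⟩, s⟩ := q
  simp only [T_apply, J_apply]
  congr 1
  ring

lemma T_T (t t' : ℝ) (q : X) : T t (T t' q) = T (t' + t) q := by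
  simp only [T_apply, add_assoc]

end SF

namespace SF

lemma fiber_E (p : I × I) : {s : ℝ | (p, s) ∈ E} = Ico 0 (-Real.log (br (dig p.2) p.1)) := by
  ext s
  change (0 ≤ s ∧ s + Real.log (br (dig p.2) p.1) < 0) ↔ _
  rw [mem_Ico]
  constructor <;> rintro ⟨h1, h2⟩ <;> exact ⟨h1, by linarith⟩

lemma muX_E : muX E = ∫⁻ p, ENNReal.ofReal (-Real.log (br (dig p.2) p.1)) ∂muD := by
  rw [muX, Measure.prod_apply measurableSet_E]
  refine lintegral_congr fun p => ?_
  have : Prod.mk p ⁻¹' E = {s : ℝ | (p, s) ∈ E} := rfl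
  rw [this, fiber_E, Real.volume_Ico, sub_zero]

lemma lintegral_log_lt_top : ∫⁻ y : I, ENNReal.ofReal (Real.log 2 - Real.log y) < ⊤ := by
  have h := lintegral_subtype_comap measurableSet_Iset
    (fun t : ℝ => ENNReal.ofReal (Real.log 2 - Real.log t)) (μ := volume)
  have h2 : ∫⁻ y : I, ENNReal.ofReal (Real.log 2 - Real.log y) =
      ∫⁻ t in Iset, ENNReal.ofReal (Real.log 2 - Real.log t) := h
  rw [h2]
  have h3 : IntervalIntegrable (fun t => Real.log 2 - Real.log t) volume 0 1 :=
    intervalIntegrable_const.sub intervalIntegral.intervalIntegrable_log'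
  have h4 := (intervalIntegrable_iff_integrableOn_Ioc_of_le zero_le_one).1 h3
  refine (lintegral_mono_set (t := Ioc (0:ℝ) 1) fun x hx => ⟨hx.1.1, hx.1.2.le⟩).trans_lt ?_
  exact h4.lintegral_lt_top

lemma neg_log_br_le (x y : I) : -Real.log (br (dig y) x) ≤ Real.log 2 - Real.log y := by
  have h1 := sum_eq x y
  have h2 := dig_fr y
  have hy := I_pos y; have hb := I_pos (br (dig y) x)
  have hx := I_lt x; have hf := I_pos (fr y)
  have h3 := one_lt_inv y
  have h4 : 1 / (br (dig y) x : ℝ) ≤ 2 / y := by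
    have : (2:ℝ) / y = 1 / y + 1 / y := by ring
    rw [this]; linarith
  have := Real.log_le_log (by positivity) h4
  rw [one_div, Real.log_inv, Real.log_div (by norm_num) hy.ne'] at this
  exact this

lemma rho_le (p : I × I) : rho p ≤ ENNReal.ofReal (1 / Real.log 2) := by
  refine ENNReal.ofReal_le_ofReal ?_
  have h2 : 0 < Real.log 2 := Real.log_pos (by norm_num)
  have h1 := one_add_pos p.1 p.2
  have hx := I_pos p.1; have hy := I_pos p.2
  refine one_div_le_one_div_of_le h2 ?_
  have : (1:ℝ) ≤ (1 + p.1 * p.2) ^ 2 := by nlinarith [mul_pos hx hy]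
  nlinarith

lemma measurable_nlb : Measurable fun p : I × I => -Real.log (br (dig p.2) p.1) :=
  (Real.measurable_log.comp (measurable_subtype_coe.comp measurable_br2)).neg

lemma muX_E_lt_top : muX E < ⊤ := by
  rw [muX_E, lintegral_muD _ measurable_nlb.ennreal_ofReal]
  have hle : ∫⁻ x : I, ∫⁻ y : I, rho (x, y) * ENNReal.ofReal (-Real.log (br (dig y) x)) ≤
      ∫⁻ _ : I, ∫⁻ y : I, ENNReal.ofReal (1 / Real.log 2) * ENNReal.ofReal (Real.log 2 - Real.log y) :=
    lintegral_mono fun x => lintegral_mono fun y =>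
      mul_le_mul' (rho_le _) (ENNReal.ofReal_le_ofReal (neg_log_br_le x y))
  refine hle.trans_lt ?_
  rw [lintegral_const, lintegral_const_mul _ (by fun_prop)]
  exact ENNReal.mul_lt_top (ENNReal.mul_lt_top ENNReal.ofReal_lt_top lintegral_log_lt_top)
    (measure_lt_top _ _)

lemma rho_ne_zero (p : I × I) : rho p ≠ 0 := by
  have h2 : 0 < Real.log 2 := Real.log_pos (by norm_num)
  have h1 := one_add_pos p.1 p.2
  rw [rho, Ne, ENNReal.ofReal_eq_zero, not_le]
  positivity

lemma vol_ac_muX : (volume : Measure X) ≪ muX := by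
  rw [Measure.volume_eq_prod, muX]
  refine Measure.AbsolutelyContinuous.prod ?_ Measure.AbsolutelyContinuous.rfl
  exact withDensity_absolutelyContinuous' measurable_rho.aemeasurable (ae_of_all _ rho_ne_zero)

lemma muX_ac_vol : muX ≪ (volume : Measure X) := by
  rw [Measure.volume_eq_prod (I × I) ℝ, muX]
  refine Measure.AbsolutelyContinuous.prod ?_ Measure.AbsolutelyContinuous.rfl
  exact withDensity_absolutelyContinuous _ _

instance : NeZero (volume : Measure X) := by
  constructor
  intro h
  have h1 : volume (univ : Set X) = 0 := by rw [h]; simp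
  rw [Measure.volume_eq_prod, Measure.volume_eq_prod, ← univ_prod_univ, ← univ_prod_univ,
    Measure.prod_prod, Measure.prod_prod, mul_eq_zero, mul_eq_zero] at h1
  simp [NeZero.ne] at h1

lemma muX_E_ne_zero : muX E ≠ 0 := by
  intro h
  have h0 := red_null fundE mp_R measurable_R_symm measurableSet_E (S := univ) MeasurableSet.univ
    (by simpa using h)
  rw [preimage_univ] at h0
  have := vol_ac_muX h0
  rw [Measure.measure_univ_eq_zero] at this
  exact NeZero.ne (volume : Measure X) this

/-- The normalized invariant measure. -/
noncomputable def nu : Measure X := (muX E)⁻¹ • muX.restrict E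

instance : IsProbabilityMeasure nu := by
  constructor
  rw [nu, Measure.smul_apply, Measure.restrict_apply_univ, smul_eq_mul]
  exact ENNReal.inv_mul_cancel muX_E_ne_zero muX_E_lt_top.ne

lemma ae_nu {P : X → Prop} : (∀ᵐ q ∂nu, P q) ↔ ∀ᵐ q ∂muX, q ∈ E → P q := by
  rw [nu, ← ae_restrict_iff' measurableSet_E]
  rw [ae_iff, ae_iff, Measure.smul_apply, smul_eq_mul, mul_eq_zero]
  simp [muX_E_lt_top.ne]

lemma ae_nu_E : ∀ᵐ q ∂nu, q ∈ E := ae_nu.2 (ae_of_all _ fun _ h => h)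

lemma qmp_pr : Measure.QuasiMeasurePreserving pr volume nu := by
  refine ⟨measurable_pr, Measure.AbsolutelyContinuous.mk fun S hS h0 => ?_⟩
  rw [Measure.map_apply measurable_pr hS]
  refine vol_ac_muX (red_null fundE mp_R measurable_R_symm measurableSet_E hS ?_)
  rw [nu, Measure.smul_apply, Measure.restrict_apply hS, smul_eq_mul, mul_eq_zero] at h0
  rw [inter_comm]
  rcases h0 with h0 | h0
  · simp [muX_E_lt_top.ne] at h0
  · exact h0

lemma mp_Phi (t : ℝ) : MeasurePreserving (Phi t) nu nu :=
  mp_red fundE mp_R measurable_R_symm measurableSet_E (T t) (mp_T t) (measurable_T_symm t) 1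
    (by norm_num) (T_zpow t) _

lemma mp_Jh : MeasurePreserving Jh nu nu :=
  mp_red fundE mp_R measurable_R_symm measurableSet_E J mp_J measurable_J (-1)
    (by norm_num) J_zpow _

/-- The Hilbert space. -/
noncomputable abbrev HH := Lp ℝ 2 nu

/-- The Koopman operators of the flow. -/
noncomputable def UU (t : ℝ) : HH →ₗᵢ[ℝ] HH :=
  Lp.compMeasurePreservingₗᵢ ℝ (Phi t) (mp_Phi t)

/-- The Koopman operator of the time reversal. -/
noncomputable def KK : HH →ₗᵢ[ℝ] HH := Lp.compMeasurePreservingₗᵢ ℝ Jh mp_Jh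

lemma UU_coe (t : ℝ) (f : HH) : ∀ᵐ q ∂nu, UU t f q = f (Phi t q) :=
  Lp.coeFn_compMeasurePreserving f (mp_Phi t)

lemma KK_coe (f : HH) : ∀ᵐ q ∂nu, KK f q = f (Jh q) :=
  Lp.coeFn_compMeasurePreserving f mp_Jh

lemma UU_UU (t : ℝ) (f : HH) : UU t (UU (-t) f) = f := by
  apply Lp.ext
  filter_upwards [UU_coe t (UU (-t) f), (mp_Phi t).quasiMeasurePreserving.ae (UU_coe (-t) f),
    ae_nu_E] with q h1 h2 h3
  rw [h1, h2, Phi, Phi, pr_T_pr, T_T, add_neg_cancel]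
  have : T 0 q = q := by simp [T_apply]
  rw [this, pr_of_mem h3]

lemma KK_KK (f : HH) : KK (KK f) = f := by
  apply Lp.ext
  filter_upwards [KK_coe (KK f), mp_Jh.quasiMeasurePreserving.ae (KK_coe f),
    ae_nu_E] with q h1 h2 h3
  rw [h1, h2, Jh, Jh, pr_J_pr, J_J, pr_of_mem h3]

lemma KK_UU (t : ℝ) (f : HH) : KK (UU t f) = UU (-t) (KK f) := by
  apply Lp.ext
  filter_upwards [KK_coe (UU t f), mp_Jh.quasiMeasurePreserving.ae (UU_coe t f),
    UU_coe (-t) (KK f), (mp_Phi (-t)).quasiMeasurePreserving.ae (KK_coe f)] with q h1 h2 h3 h4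
  rw [h1, h2, h3, h4, Phi, Phi, Jh, Jh, pr_J_pr, pr_T_pr, J_T, neg_neg]

/-- The constant function one. -/
noncomputable def ee : HH := indicatorConstLp 2 MeasurableSet.univ (measure_ne_top nu _) 1

lemma ee_coe : ∀ᵐ q ∂nu, ee q = 1 := by
  have := indicatorConstLp_coeFn (p := 2) (μ := nu) (s := univ) (hs := MeasurableSet.univ)
    (hμs := measure_ne_top nu _) (c := (1:ℝ))
  filter_upwards [this] with q hq
  rw [ee, hq]; simp

lemma ee_norm : ‖ee‖ = 1 := by
  rw [ee, norm_indicatorConstLp (by norm_num) (by norm_num)]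
  simp

lemma UU_ee (t : ℝ) : UU t ee = ee := by
  apply Lp.ext
  filter_upwards [UU_coe t ee, (mp_Phi t).quasiMeasurePreserving.ae ee_coe, ee_coe] with q h1 h2 h3
  rw [h1, h2, h3]

lemma UU_adj (t : ℝ) (f g : HH) : inner ℝ (UU t f) g = inner ℝ f (UU (-t) g) := by
  conv_lhs => rw [← UU_UU t g]
  rw [LinearIsometry.inner_map_map]

lemma KK_adj (f g : HH) : inner ℝ (KK f) g = inner ℝ f (KK g) := by
  conv_lhs => rw [← KK_KK g]
  rw [LinearIsometry.inner_map_map]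

lemma ae_X {P : X → Prop} (hP : MeasurableSet {q | P q}) :
    (∀ᵐ q, P q) ↔ ∀ᵐ x : I, ∀ᵐ y : I, ∀ᵐ s : ℝ, P ((x, y), s) := by
  have h1 : MeasurableSet {p : I × I | ∀ᵐ s : ℝ, P (p, s)} := by
    have := measurable_measure_prodMk_left (ν := (volume : Measure ℝ)) hP.compl
    exact this (measurableSet_singleton 0)
  rw [Measure.volume_eq_prod (I × I) ℝ, Measure.ae_prod_iff_ae_ae hP, Measure.volume_eq_prod,
    Measure.ae_prod_iff_ae_ae h1]

end SF

namespace SF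

lemma qmp_T (t : ℝ) : Measure.QuasiMeasurePreserving (T t) (volume : Measure X) volume :=
  ((mp_T t).quasiMeasurePreserving.mono_left vol_ac_muX).mono_right muX_ac_vol

lemma qmp_J : Measure.QuasiMeasurePreserving J (volume : Measure X) volume :=
  (mp_J.quasiMeasurePreserving.mono_left vol_ac_muX).mono_right muX_ac_vol

lemma ae_add {P : ℝ → Prop} (h : ∀ᵐ s, P s) (c : ℝ) : ∀ᵐ s, P (s + c) :=
  (measurePreserving_add_right volume c).quasiMeasurePreserving.ae h

/-- The shift along a stable leaf. -/
noncomputable def psi (x x' y : I) : ℝ := Real.log (1 + x' * y) - Real.log (1 + x * y)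

lemma tau_apply (x' x y : I) (s : ℝ) : tau x' ((x, y), s) = ((x', y), s + psi x x' y) := by
  simp only [tau, psi]
  congr 1
  ring

lemma qmp_tau : Measure.QuasiMeasurePreserving (fun p : I × X => tau p.1 p.2) volume volume := by
  refine ⟨measurable_tau, Measure.AbsolutelyContinuous.mk fun S hS h0 => ?_⟩
  rw [Measure.map_apply measurable_tau hS]
  have h1 : ∀ᵐ q : X, q ∈ Sᶜ := by rwa [ae_iff, show {a | a ∉ Sᶜ} = S by ext; simp]
  rw [ae_X (P := fun q => q ∈ Sᶜ) hS.compl] at h1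
  have h2 : MeasurableSet ((fun p : I × X => tau p.1 p.2) ⁻¹' Sᶜ) := measurable_tau hS.compl
  have h3 : ∀ᵐ p : I × X, p ∈ (fun p : I × X => tau p.1 p.2) ⁻¹' Sᶜ := by
    rw [Measure.volume_eq_prod, Measure.ae_prod_mem_iff_ae_ae_mem h2]
    filter_upwards [h1] with x' hx'
    rw [ae_X (P := fun q => (x', q) ∈ (fun p : I × X => tau p.1 p.2) ⁻¹' Sᶜ)
      (measurable_prodMk_left h2)]
    refine ae_of_all _ fun x => ?_
    filter_upwards [hx'] with y hy
    have := ae_add hy (psi x x' y)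
    filter_upwards [this] with s hs
    change tau x' ((x, y), s) ∈ Sᶜ
    rw [tau_apply]
    exact hs
  rw [ae_iff] at h3
  convert h3 using 2
  ext; simp

lemma ac_restrict {Q : Type*} [MeasurableSpace Q] (m : Measure Q) (S : Set Q) : m.restrict S ≪ m :=
  Measure.absolutelyContinuous_of_le Measure.restrict_le_self

/-- The region of validity. -/
def Zc (c : ℝ) : Set (I × X) := {p | c ≤ uh p.2}

lemma measurableSet_Zc (c : ℝ) : MeasurableSet (Zc c) :=
  measurableSet_le measurable_const (measurable_uh.comp measurable_snd)

lemma qmp_alpha0 : Measure.QuasiMeasurePreserving (fun p : I × X => pr p.2) volume nu :=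
  qmp_pr.comp Measure.quasiMeasurePreserving_snd

lemma qmp_beta0 : Measure.QuasiMeasurePreserving (fun p : I × X => pr (tau p.1 p.2)) volume nu :=
  qmp_pr.comp qmp_tau

/-- Functions constant along stable leaves high up. -/
noncomputable def WW (c : ℝ) : Submodule ℝ HH :=
  Weq nu (volume.restrict (Zc c)) (fun p => pr p.2) (fun p => pr (tau p.1 p.2))
    (qmp_alpha0.mono_left (ac_restrict _ _)) (qmp_beta0.mono_left (ac_restrict _ _))

lemma mem_WW {c : ℝ} {f : HH} :
    f ∈ WW c ↔ ∀ᵐ p : I × X, p ∈ Zc c → f (pr p.2) = f (pr (tau p.1 p.2)) := by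
  rw [← ae_restrict_iff' (measurableSet_Zc c)]
  rfl

lemma isClosed_WW (c : ℝ) : IsClosed (WW c : Set HH) := isClosed_Weq _ _ _ _ _ _

lemma WW_mono : Monotone WW := by
  intro c c' hcc f hf
  rw [mem_WW] at hf ⊢
  filter_upwards [hf] with p hp h
  exact hp (le_trans hcc h)

lemma tau_T (t : ℝ) (x' : I) (q : X) : tau x' (T t q) = T t (tau x' q) := by
  obtain ⟨⟨x, y⟩, s⟩ := q
  simp only [T_apply, tau_apply]
  congr 1
  ring

lemma uh_T (t : ℝ) (q : X) : uh (T t q) = uh q + t := by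
  simp only [uh, T_apply]; ring

lemma UU_WW (t c : ℝ) (f : HH) (hf : f ∈ WW c) : UU t f ∈ WW (c - t) := by
  rw [mem_WW] at hf ⊢
  have hq : Measure.QuasiMeasurePreserving (Prod.map id (T t) : I × X → I × X) volume volume := by
    have h1 : MeasurePreserving (T t) (volume : Measure X) volume :=
      (MeasurePreserving.id (volume : Measure (I × I))).prod (measurePreserving_add_right volume t)
    exact ((MeasurePreserving.id (volume : Measure I)).prod h1).quasiMeasurePreserving
  filter_upwards [hq.ae hf, qmp_alpha0.ae (UU_coe t f), qmp_beta0.ae (UU_coe t f)] with p h1 h2 h3 hp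
  rw [h2, h3, Phi, Phi, pr_T_pr, pr_T_pr, ← tau_T]
  refine h1 ?_
  change c - t ≤ uh p.2 at hp
  change c ≤ uh (T t p.2)
  rw [uh_T]; linarith

lemma WW_all {f : HH} (hf : ∀ c, f ∈ WW c) :
    ∀ᵐ p : I × X, f (pr p.2) = f (pr (tau p.1 p.2)) := by
  have : ∀ᵐ p : I × X, ∀ n : ℕ, p ∈ Zc (-n) → f (pr p.2) = f (pr (tau p.1 p.2)) :=
    ae_all_iff.2 fun n => mem_WW.1 (hf _)
  filter_upwards [this] with p hp
  obtain ⟨n, hn⟩ := exists_nat_ge (-uh p.2)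
  exact hp n (by change -(n:ℝ) ≤ uh p.2; linarith)

lemma J_tau_J (y' x y : I) (s : ℝ) : J (tau y' (J ((x, y), s))) = ((x, y'), s) := by
  rw [J_apply, tau_apply, J_apply]
  congr 1
  simp only [psi]
  rw [mul_comm (x:ℝ) y]; ring

lemma psi_inj {x x' : I} (h : x ≠ x') : Function.Injective (psi x x') := by
  intro y y' hy
  simp only [psi] at hy
  have a1 := one_add_pos x y; have a2 := one_add_pos x y'
  have a3 := one_add_pos x' y; have a4 := one_add_pos x' y'
  have h1 : Real.log ((1 + x' * y) * (1 + x * y')) = Real.log ((1 + x' * y') * (1 + x * y)) := by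
    rw [Real.log_mul a3.ne' a2.ne', Real.log_mul a4.ne' a1.ne']; linarith
  have h2 := Real.log_injOn_pos (mul_pos a3 a2) (mul_pos a4 a1) h1
  have h3 : ((x':ℝ) - x) * (y - y') = 0 := by nlinarith
  rcases mul_eq_zero.1 h3 with h3 | h3
  · exact absurd (Subtype.ext (by linarith)) h
  · exact Subtype.ext (by linarith)

/-- The group of periods. -/
def periods (h : ℝ → ℝ) : AddSubgroup ℝ where
  carrier := {p | ∀ᵐ s, h (s + p) = h s}
  add_mem' := by
    intro p p' hp hp'
    have hp : ∀ᵐ s, h (s + p) = h s := hp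
    have hp' : ∀ᵐ s, h (s + p') = h s := hp'
    change ∀ᵐ s, h (s + (p + p')) = h s
    filter_upwards [hp, ae_add hp' p] with s h1 h2
    rw [← h1, ← h2, add_assoc]
  zero_mem' := by
    change ∀ᵐ s, h (s + 0) = h s
    simp
  neg_mem' := by
    intro p hp
    have hp : ∀ᵐ s, h (s + p) = h s := hp
    change ∀ᵐ s, h (s + -p) = h s
    filter_upwards [ae_add hp (-p)] with s h1
    rw [← h1, neg_add_cancel_right]

lemma const_of_shifts (g₀ h : ℝ → ℝ) (hh : Measurable h) (x x' : I) (hx : x ≠ x')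
    (H : ∀ᵐ y : I, ∀ᵐ s, g₀ s = h (s + psi x x' y)) : ∃ c, ∀ᵐ s, h s = c := by
  refine ae_const_of_dense_periods h hh ?_
  change Dense (periods h : Set ℝ)
  rcases AddSubgroup.dense_or_cyclic (periods h) with hd | ⟨a, ha⟩
  · exact hd
  exfalso
  have hcount : (periods h : Set ℝ).Countable := by
    rw [ha, ← AddSubgroup.zmultiples_eq_closure]
    exact Set.countable_range _
  obtain ⟨y₀, hy₀⟩ := H.exists
  have hsub : {y : I | ∀ᵐ s, g₀ s = h (s + psi x x' y)} ⊆
      (fun y => psi x x' y - psi x x' y₀) ⁻¹' (periods h : Set ℝ) := by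
    intro y hy
    have hy : ∀ᵐ s, g₀ s = h (s + psi x x' y) := hy
    change ∀ᵐ s, h (s + (psi x x' y - psi x x' y₀)) = h s
    have := ae_add (P := fun s => h (s + psi x x' y) = h (s + psi x x' y₀)) (by
      filter_upwards [hy, hy₀] with s h1 h2
      rw [← h1, ← h2]) (-psi x x' y₀)
    filter_upwards [this] with s hs
    rw [neg_add_cancel_right] at hs
    rw [← hs]; congr 1; ring
  have hc2 := (hcount.preimage_of_injOn (f := fun y => psi x x' y - psi x x' y₀)
    (fun y _ y' _ hyy => psi_inj hx (by simpa using hyy))).mono hsub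
  have h0 := countable_null hc2
  have : ∀ᵐ y : I, False := by
    filter_upwards [H, measure_eq_zero_iff_ae_notMem.1 h0] with y h1 h2
    exact h2 h1
  simpa using this.exists

lemma ergodic (f : HH) (hf : ∀ c, f ∈ WW c) (hKf : ∀ c, KK f ∈ WW c) : ∃ a : ℝ, f = a • ee := by
  have hfm : Measurable (f : X → ℝ) := (Lp.stronglyMeasurable f).measurable
  set F : X → ℝ := fun q => f (pr q) with hF
  have hFm : Measurable F := hfm.comp measurable_pr
  have hA : ∀ᵐ p : I × X, F p.2 = F (tau p.1 p.2) := WW_all hf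
  have hB : ∀ᵐ p : I × X, F (J p.2) = F (J (tau p.1 p.2)) := by
    filter_upwards [WW_all hKf, qmp_alpha0.ae (KK_coe f), qmp_beta0.ae (KK_coe f)] with p h1 h2 h3
    rw [h2, h3, Jh, Jh, pr_J_pr, pr_J_pr] at h1
    exact h1
  rw [Measure.volume_eq_prod] at hB
  obtain ⟨y₀, hy₀⟩ := (Measure.ae_ae_of_ae_prod hB).exists
  have hy₁ : ∀ᵐ q : X, F q = F ((q.1.1, y₀), q.2) := by
    filter_upwards [qmp_J.ae hy₀] with q hq
    obtain ⟨⟨x, y⟩, s⟩ := q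
    simp only [J_J, J_tau_J] at hq
    exact hq
  have hA2 : ∀ᵐ p : I × X, F ((p.2.1.1, y₀), p.2.2) = F ((p.1, y₀), (tau p.1 p.2).2) := by
    filter_upwards [hA, qmp_tau.ae hy₁, Measure.quasiMeasurePreserving_snd.ae hy₁] with p h1 h2 h3
    rw [← h3, h1, h2]; rfl
  rw [Measure.volume_eq_prod] at hA2
  have hA3 : ∀ᵐ x' : I, ∀ᵐ x : I, ∀ᵐ y : I, ∀ᵐ s : ℝ,
      F ((x, y₀), s) = F ((x', y₀), s + psi x x' y) := by
    filter_upwards [Measure.ae_ae_of_ae_prod hA2] with x' hx'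
    rw [ae_X] at hx'
    · simpa only [tau_apply] using hx'
    · have ht : Measurable (fun q : X => tau x' q) := measurable_tau.comp measurable_prodMk_left
      exact measurableSet_eq_fun (hFm.comp (by fun_prop)) (hFm.comp (by fun_prop))
  obtain ⟨x', hx'⟩ := hA3.exists
  have hne : ∀ᵐ x : I, x ≠ x' := measure_eq_zero_iff_ae_notMem.1 (countable_null (countable_singleton x'))
  obtain ⟨x, hx, hxx⟩ := (hx'.and hne).exists
  obtain ⟨c, hc⟩ := const_of_shifts (fun s => F ((x, y₀), s)) (fun s => F ((x', y₀), s))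
    (hFm.comp (by fun_prop)) x x' hxx hx
  have hfin : ∀ᵐ q : X, F ((q.1.1, y₀), q.2) = c := by
    have hm : Measurable fun q : X => F ((q.1.1, y₀), q.2) := hFm.comp (by fun_prop)
    rw [ae_X (P := fun q => F ((q.1.1, y₀), q.2) = c) (measurableSet_eq_fun hm measurable_const)]
    filter_upwards [hx'] with x h1
    filter_upwards [h1] with y h2
    filter_upwards [h2, ae_add hc (psi x x' y)] with s h3 h4
    exact h3.trans h4
  refine ⟨c, Lp.ext ?_⟩
  have hcn : ∀ᵐ q ∂nu, f q = c := by
    rw [ae_nu]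
    filter_upwards [muX_ac_vol.ae_le hy₁, muX_ac_vol.ae_le hfin] with q h1 h2 hE
    rw [h2] at h1
    rw [← h1, hF]
    simp only [pr_of_mem hE]
  filter_upwards [hcn, ee_coe, Lp.coeFn_smul c ee] with q h1 h2 h3
  rw [h1, h3, Pi.smul_apply, h2]; simp

end SF

namespace SF

lemma L2_tendsto (u : ℕ → HH) (v : HH) (C : ℝ) (hu : ∀ n, ∀ᵐ q ∂nu, |u n q| ≤ C)
    (hv : ∀ᵐ q ∂nu, |v q| ≤ C) (hlim : ∀ᵐ q ∂nu, Tendsto (fun n => u n q) atTop (𝓝 (v q))) :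
    Tendsto (fun n => ‖u n - v‖ ^ 2) atTop (𝓝 0) := by
  have h1 : ∀ n, ‖u n - v‖ ^ 2 = ∫ q, (u n q - v q) ^ 2 ∂nu := by
    intro n
    rw [← real_inner_self_eq_norm_sq, L2.inner_def]
    refine integral_congr_ae ?_
    filter_upwards [Lp.coeFn_sub (u n) v] with q hq
    rw [hq, Pi.sub_apply]
    simp [pow_two]
  simp only [h1]
  have h0 : (0:ℝ) = ∫ q, (0:ℝ) ∂nu := by simp
  rw [h0]
  refine tendsto_integral_of_dominated_convergence (fun _ => (2 * C) ^ 2) (fun n => ?_) (integrable_const _)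
    (fun n => ?_) ?_
  · exact ((Lp.aestronglyMeasurable (u n)).sub (Lp.aestronglyMeasurable v)).pow 2
  · filter_upwards [hu n, hv] with q h2 h3
    rw [Real.norm_eq_abs, abs_of_nonneg (sq_nonneg _)]
    refine sq_le_sq' ?_ ?_ <;> rw [abs_le] at h2 h3 <;> linarith
  · filter_upwards [hlim] with q hq
    have := (hq.sub_const (v q)).pow 2
    simpa using this

/-- Lying on the same stable leaf. -/
def Sim (q q' : X) : Prop := q.1.2 = q'.1.2 ∧ uh q = uh q'

lemma uh_tau (x' : I) (q : X) : uh (tau x' q) = uh q := by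
  simp only [uh, tau]; ring

lemma sim_tau (x' : I) (q : X) : Sim (tau x' q) q := ⟨rfl, uh_tau x' q⟩

lemma Sim.tau_eq {q q' : X} (h : Sim q q') (x' : I) : tau x' q = tau x' q' := by
  have h2 := h.2
  simp only [uh] at h2
  simp only [tau, h2]
  rw [h.1]

lemma tau_self (q : X) : tau q.1.1 q = q := by
  obtain ⟨⟨x, y⟩, s⟩ := q
  simp [tau]

lemma Sim.R {q q' : X} (h : Sim q q') : Sim (R q) (R q') := by
  refine ⟨congrArg fr h.1, ?_⟩
  rw [uh_R, uh_R, h.1, h.2]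

lemma Sim.pow {q q' : X} (h : Sim q q') (n : ℕ) : Sim ((SF.R ^ n) q) ((SF.R ^ n) q') := by
  induction n with
  | zero => simpa using h
  | succ n ih =>
    rw [pow_succ', Equiv.Perm.mul_apply, Equiv.Perm.mul_apply]
    exact ih.R

lemma Sim.mem_Ec {q q' : X} (h : Sim q q') {c : ℝ} (hq : q ∈ Ec c) : q' ∈ Ec c := by
  obtain ⟨h1, h2⟩ := hq
  exact ⟨h.2 ▸ h1, h.R.2 ▸ h2⟩

lemma uh_pow_le (q : X) (n : ℕ) : uh ((R ^ n) q) ≤ uh q := by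
  induction n with
  | zero => simp
  | succ n ih =>
    rw [pow_succ', Equiv.Perm.mul_apply]
    exact (uh_R_lt _).le.trans ih

lemma red_up {q : X} {c : ℝ} (h : c ≤ uh q) : ∃ n : ℕ, (R ^ n) q ∈ Ec c := by
  obtain ⟨n, hn⟩ := red_exists (fundEc c) q
  have hm := red_mem (fundEc c) q
  rw [hn] at hm
  cases n with
  | ofNat n => exact ⟨n, by simpa using hm⟩
  | negSucc m =>
    exfalso
    have h1 : q = (R ^ m) (R ((R ^ (Int.negSucc m)) q)) := by
      rw [← Equiv.Perm.mul_apply (R ^ m) R, ← pow_succ, zpow_negSucc, ← Equiv.Perm.mul_apply, mul_inv_cancel, Equiv.Perm.one_apply]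
    have h2 := uh_pow_le (R ((R ^ (Int.negSucc m)) q)) m
    rw [← h1] at h2
    linarith [hm.2]

lemma red_down {q : X} {c : ℝ} (h : uh q < c) : ∃ n : ℕ, (R ^ n) (red (fundEc c) q) = q := by
  obtain ⟨n, hn⟩ := red_exists (fundEc c) q
  have hm := red_mem (fundEc c) q
  cases n with
  | ofNat n =>
    exfalso
    rw [hn] at hm
    have := uh_pow_le q n
    have h1 : c ≤ uh ((R ^ n) q) := by simpa using hm.1
    linarith
  | negSucc m =>
    refine ⟨m + 1, ?_⟩
    rw [hn, zpow_negSucc, ← Equiv.Perm.mul_apply, mul_inv_cancel, Equiv.Perm.one_apply]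

lemma br_sub (n : ℕ) (x x' : I) :
    |(br n x : ℝ) - br n x'| = (br n x * br n x') * |(x : ℝ) - x'| := by
  have h1 := I_pos (br n x); have h2 := I_pos (br n x')
  have hx := I_pos x; have hx' := I_pos x'
  have : (br n x : ℝ) - br n x' = (br n x * br n x') * -(x - x') := by
    rw [br_coe, br_coe]; field_simp; ring
  rw [this, abs_mul, abs_neg, abs_of_pos (mul_pos h1 h2)]

lemma contr (n : ℕ) : ∀ q q' : X, q.1.2 = q'.1.2 →
    |(((R ^ n) q).1.1 : ℝ) - ((R ^ n) q').1.1| ≤ 2 * (1 / 2) ^ n * |(q.1.1 : ℝ) - q'.1.1| := by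
  induction n using Nat.twoStepInduction with
  | zero =>
    intro q q' _
    simp only [pow_zero, Equiv.Perm.one_apply]
    linarith [abs_nonneg ((q.1.1 : ℝ) - q'.1.1)]
  | one =>
    intro q q' h
    obtain ⟨⟨x, y⟩, s⟩ := q
    obtain ⟨⟨x', y'⟩, s'⟩ := q'
    have h : y = y' := h
    subst h
    rw [pow_one, R_apply, R_apply]
    simp only
    rw [br_sub]
    have h1 := I_pos (br (dig y) x); have h2 := I_pos (br (dig y) x')
    have h3 := I_lt (br (dig y) x); have h4 := I_lt (br (dig y) x')
    refine mul_le_mul_of_nonneg_right ?_ (abs_nonneg _)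
    nlinarith
  | more n ih _ =>
    intro q q' h
    have e : ∀ q : X, (R ^ (n + 2)) q = (R ^ n) (R (R q)) := fun q => by
      rw [pow_add, Equiv.Perm.mul_apply]; rfl
    rw [e, e]
    have h2 : (R (R q)).1.2 = (R (R q')).1.2 := congrArg (fun y => fr (fr y)) h
    refine (ih _ _ h2).trans ?_
    obtain ⟨⟨x, y⟩, s⟩ := q
    obtain ⟨⟨x', y'⟩, s'⟩ := q'
    have h : y = y' := h
    subst h
    simp only [R_apply]
    rw [br_sub, br_sub]
    set k := dig y
    set m := dig (fr y)
    have b1 := br_mul_le k m x; have b2 := br_mul_le k m x'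
    have h1 := I_pos (br k x); have h2 := I_pos (br k x')
    have h3 := I_pos (br m (br k x)); have h4 := I_pos (br m (br k x'))
    have h5 : ((br k x : ℝ) * br m (br k x)) * (br k x' * br m (br k x')) ≤ 1 / 2 * (1 / 2) :=
      mul_le_mul b1 b2 (by positivity) (by norm_num)
    have h6 := mul_le_mul_of_nonneg_right h5 (abs_nonneg ((x : ℝ) - x'))
    have h7 := mul_le_mul_of_nonneg_left h6 (by positivity : (0:ℝ) ≤ 2 * (1 / 2) ^ n)
    rw [pow_add]
    refine le_trans (le_of_eq ?_) (h7.trans (le_of_eq ?_)) <;> ring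

lemma red_tau (x₀ : I) (q : X) (N : ℕ) (c : ℝ) (h : uh ((R ^ (-(N:ℤ))) q) < c) :
    ∃ x' : I, |(x' : ℝ) - q.1.1| ≤ 2 * (1 / 2) ^ N ∧
      pr (tau x₀ (red (fundEc c) q)) = pr (tau x' q) := by
  obtain ⟨k, hk⟩ := red_down h
  rw [red_zpow] at hk
  set p := red (fundEc c) q
  have hq : (R ^ (N + k)) p = q := by
    rw [pow_add, Equiv.Perm.mul_apply, hk, zpow_neg, zpow_natCast, ← Equiv.Perm.mul_apply, mul_inv_cancel, Equiv.Perm.one_apply]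
  have hs := (sim_tau x₀ p).pow (N + k)
  rw [hq] at hs
  refine ⟨((R ^ (N + k)) (tau x₀ p)).1.1, ?_, ?_⟩
  · have := contr (N + k) (tau x₀ p) p rfl
    rw [hq] at this
    refine this.trans ?_
    have h1 : |((tau x₀ p).1.1 : ℝ) - p.1.1| ≤ 1 := by
      have a1 := I_pos (tau x₀ p).1.1; have a2 := I_lt (tau x₀ p).1.1
      have a3 := I_pos p.1.1; have a4 := I_lt p.1.1
      rw [abs_le]; constructor <;> linarith
    have h2 : (2:ℝ) * (1 / 2) ^ (N + k) ≤ 2 * (1 / 2) ^ N := by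
      refine mul_le_mul_of_nonneg_left ?_ (by norm_num)
      exact pow_le_pow_of_le_one (by norm_num) (by norm_num) (by omega)
    calc _ ≤ 2 * (1 / 2 : ℝ) ^ N * 1 := mul_le_mul h2 h1 (abs_nonneg _) (by positivity)
      _ = _ := mul_one _
  · rw [← hs.tau_eq, tau_self]
    have := red_zpow fundE (tau x₀ p) ((N + k : ℕ) : ℤ)
    rw [zpow_natCast] at this
    exact this.symm

lemma red_sim {q q' : X} (h : Sim q q') {c : ℝ} (hc : c ≤ uh q) :
    Sim (red (fundEc c) q) (red (fundEc c) q') := by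
  obtain ⟨n, hn⟩ := red_up hc
  have hs := h.pow n
  have h1 := red_eq (fundEc c) (q := q) (n := n) (by simpa using hn)
  have h2 := red_eq (fundEc c) (q := q') (n := n) (by simpa using hs.mem_Ec hn)
  rw [h1, h2, zpow_natCast]
  exact hs

/-- The approximating functions. -/
noncomputable def app (x₀ : I) (φ : X → ℝ) (c : ℝ) (q : X) : ℝ :=
  φ (pr (tau x₀ (red (fundEc c) q)))

lemma measurable_app (x₀ : I) {φ : X → ℝ} (hφ : Measurable φ) (c : ℝ) :
    Measurable (app x₀ φ c) := by
  have h1 : Measurable (red (fundEc c)) :=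
    measurable_red (fundEc c) measurable_R measurable_R_symm (measurableSet_Ec c)
  have ht : Measurable (fun q : X => tau x₀ q) := measurable_tau.comp measurable_prodMk_left
  exact hφ.comp (measurable_pr.comp (ht.comp h1))

lemma app_pr (x₀ : I) (φ : X → ℝ) (c : ℝ) (q : X) : app x₀ φ c (pr q) = app x₀ φ c q := by
  obtain ⟨n, hn⟩ := red_exists fundE q
  rw [app, pr, hn, red_zpow]; rfl

lemma app_tau (x₀ : I) (φ : X → ℝ) (c : ℝ) (q : X) (hc : c ≤ uh q) (x' : I) :
    app x₀ φ c q = app x₀ φ c (tau x' q) := by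
  have h1 := (red_sim (sim_tau x' q) (c := c) (by rwa [uh_tau])).tau_eq x₀
  rw [app, app, h1]

lemma mem_WW_app (x₀ : I) (φ : X → ℝ) (c : ℝ) (w : HH) (hw : ∀ᵐ q ∂nu, w q = app x₀ φ c q) :
    w ∈ WW c := by
  rw [mem_WW]
  filter_upwards [qmp_alpha0.ae hw, qmp_beta0.ae hw] with p h1 h2 h
  rw [h1, h2, app_pr, app_pr]
  exact app_tau x₀ φ c p.2 h p.1

lemma cont_slide (φ : X → ℝ) (hφ : Continuous φ) (q : X) (hq : q ∈ E) (h0 : 0 < q.2) :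
    Tendsto (fun x' : I => φ (pr (tau x' q))) (𝓝 q.1.1) (𝓝 (φ q)) := by
  have hc : Continuous fun x' : I => tau x' q := by
    have h1 : Continuous fun x' : I => Real.log (1 + x' * q.1.2) :=
      Continuous.log (by fun_prop) fun x' => (one_add_pos x' q.1.2).ne'
    unfold tau
    fun_prop
  have hb : Continuous fun x' : I => (R (tau x' q)).2 := by
    have h1 : Continuous fun x' : I => Real.log (br (dig q.1.2) x') := by
      refine Continuous.log ?_ fun x' => (I_pos _).ne'
      simp only [br_coe]
      refine Continuous.div continuous_const (by fun_prop) fun x' => ?_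
      have := I_pos x'; positivity
    exact (continuous_snd.comp hc).add h1
  have e1 : ∀ᶠ x' in 𝓝 q.1.1, 0 < (tau x' q).2 := by
    refine ((continuous_snd.comp hc).tendsto _).eventually_const_lt ?_
    simpa [tau_self] using h0
  have e2 : ∀ᶠ x' in 𝓝 q.1.1, (R (tau x' q)).2 < 0 := by
    refine (hb.tendsto _).eventually_lt_const ?_
    simpa [tau_self] using hq.2
  have e3 : Tendsto (fun x' : I => φ (tau x' q)) (𝓝 q.1.1) (𝓝 (φ q)) := by
    have := (hφ.comp hc).tendsto q.1.1
    simpa [tau_self, Function.comp_def] using this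
  refine e3.congr' ?_
  filter_upwards [e1, e2] with x' h1 h2
  rw [pr_of_mem ⟨h1.le, h2⟩]

lemma app_tendsto (x₀ : I) (φ : X → ℝ) (hφ : Continuous φ) (q : X) (hq : q ∈ E) (h0 : 0 < q.2) :
    Tendsto (fun n : ℕ => app x₀ φ n q) atTop (𝓝 (φ q)) := by
  intro V hV
  have h1 := cont_slide φ hφ q hq h0 hV
  rw [Filter.mem_map, Metric.mem_nhds_iff] at h1
  obtain ⟨δ, hδ, hball⟩ := h1
  obtain ⟨N, hN⟩ := exists_pow_lt_of_lt_one (half_pos hδ) (by norm_num : (1 / 2 : ℝ) < 1)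
  obtain ⟨M, hM⟩ := exists_nat_gt (uh ((R ^ (-(N:ℤ))) q))
  refine Filter.mem_map.2 (mem_atTop_sets.2 ⟨M, fun n hn => ?_⟩)
  obtain ⟨x', hx1, hx2⟩ := red_tau x₀ q N n (hM.trans_le (by exact_mod_cast hn))
  change app x₀ φ n q ∈ V
  rw [app, hx2]
  refine hball (a := x') ?_
  rw [Metric.mem_ball, Subtype.dist_eq, Real.dist_eq]
  linarith

lemma ae_pos : ∀ᵐ q ∂nu, 0 < q.2 := by
  rw [ae_nu]
  have h : ∀ᵐ s : ℝ, s ≠ 0 := by simp [ae_iff]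
  have h2 : ∀ᵐ q ∂muX, q.2 ≠ 0 := Measure.quasiMeasurePreserving_snd.ae h
  filter_upwards [h2] with q h1 h3
  exact lt_of_le_of_ne h3.1 (Ne.symm h1)

lemma dense_WW (f : HH) (ε : ℝ) (hε : 0 < ε) : ∃ c, ∃ w ∈ WW c, ‖f - w‖ < ε := by
  have hd := BoundedContinuousFunction.toLp_denseRange (p := 2) ℝ nu ℝ (by norm_num)
  obtain ⟨φ, hφ⟩ := Metric.denseRange_iff.1 hd f (ε / 2) (half_pos hε)
  obtain ⟨x₀⟩ : Nonempty I := by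
    by_contra h
    rw [not_nonempty_iff] at h
    exact NeZero.ne (volume : Measure I) (Measure.eq_zero_of_isEmpty _)
  set v : HH := BoundedContinuousFunction.toLp 2 nu ℝ φ with hv
  have hvc : ∀ᵐ q ∂nu, v q = φ q := BoundedContinuousFunction.coeFn_toLp 2 nu ℝ φ
  have hmem : ∀ n : ℕ, MemLp (app x₀ φ n) 2 nu := fun n =>
    MemLp.of_bound (measurable_app x₀ φ.continuous.measurable n).aestronglyMeasurable ‖φ‖
      (ae_of_all _ fun q => φ.norm_coe_le_norm _)
  have hcoe : ∀ n : ℕ, ∀ᵐ q ∂nu, (hmem n).toLp _ q = app x₀ φ n q := fun n => (hmem n).coeFn_toLp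
  have hlim := L2_tendsto (fun n => (hmem n).toLp _) v ‖φ‖
    (fun n => by
      filter_upwards [hcoe n] with q hq
      rw [hq]; exact φ.norm_coe_le_norm _)
    (by
      filter_upwards [hvc] with q hq
      rw [hq]; exact φ.norm_coe_le_norm _)
    (by
      filter_upwards [ae_all_iff.2 hcoe, hvc, ae_pos, ae_nu_E] with q h1 h2 h3 h4
      simp only [h1, h2]
      exact app_tendsto x₀ φ φ.continuous q h4 h3)
  obtain ⟨n, hn⟩ := (hlim.eventually_lt_const (by positivity : (0:ℝ) < (ε / 2) ^ 2)).exists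
  refine ⟨n, (hmem n).toLp _, mem_WW_app x₀ φ n _ (hcoe n), ?_⟩
  have h2 := lt_of_pow_lt_pow_left₀ 2 (by positivity) hn
  rw [dist_eq_norm] at hφ
  calc ‖f - (hmem n).toLp _‖ ≤ ‖f - v‖ + ‖v - (hmem n).toLp _‖ := norm_sub_le_norm_sub_add_norm_sub _ _ _
    _ < ε := by rw [norm_sub_rev v]; linarith

theorem mixing (f g : HH) :
    Tendsto (fun t => inner ℝ (UU t f) g) atTop (𝓝 (inner ℝ f ee * inner ℝ ee g)) :=
  hilbert_mixing UU KK WW ee UU_adj KK_adj KK_UU isClosed_WW WW_mono UU_WW dense_WW ee_norm UU_ee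
    ergodic f g

lemma inner_ind {A B : Set X} (hA : MeasurableSet A) (hB : MeasurableSet B) :
    inner ℝ (indicatorConstLp 2 hA (measure_ne_top nu _) (1:ℝ))
      (indicatorConstLp 2 hB (measure_ne_top nu _) (1:ℝ)) = nu.real (A ∩ B) := by
  rw [L2.inner_def, ← integral_indicator_one (hA.inter hB)]
  refine integral_congr_ae ?_
  filter_upwards [indicatorConstLp_coeFn (p := 2) (hs := hA) (hμs := measure_ne_top nu _) (c := (1:ℝ)),
    indicatorConstLp_coeFn (p := 2) (hs := hB) (hμs := measure_ne_top nu _) (c := (1:ℝ))] with q h1 h2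
  rw [h1, h2]
  by_cases ha : q ∈ A <;> by_cases hb : q ∈ B <;> simp [ha, hb]

theorem mixing_sets {A B : Set X} (hA : MeasurableSet A) (hB : MeasurableSet B) :
    Tendsto (fun t => nu (Phi t ⁻¹' A ∩ B)) atTop (𝓝 (nu A * nu B)) := by
  have h := mixing (indicatorConstLp 2 hA (measure_ne_top nu _) (1:ℝ))
    (indicatorConstLp 2 hB (measure_ne_top nu _) (1:ℝ))
  have h1 : ∀ t, UU t (indicatorConstLp 2 hA (measure_ne_top nu _) (1:ℝ)) =
      indicatorConstLp 2 ((mp_Phi t).measurable hA) (measure_ne_top nu _) (1:ℝ) := by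
    intro t
    apply Lp.ext
    filter_upwards [UU_coe t (indicatorConstLp 2 hA (measure_ne_top nu _) (1:ℝ)),
      (mp_Phi t).quasiMeasurePreserving.ae
      (indicatorConstLp_coeFn (p := 2) (hs := hA) (hμs := measure_ne_top nu _) (c := (1:ℝ))),
      indicatorConstLp_coeFn (p := 2) (hs := (mp_Phi t).measurable hA)
        (hμs := measure_ne_top nu _) (c := (1:ℝ))] with q a1 a2 a3
    rw [a1, a2, a3]; rfl
  simp only [h1, ee, inner_ind, inter_univ, univ_inter] at h
  have h2 := (ENNReal.continuous_ofReal.tendsto _).comp h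
  rw [ENNReal.ofReal_mul measureReal_nonneg, ofReal_measureReal, ofReal_measureReal] at h2
  refine h2.congr fun t => ?_
  simp

end SF

namespace SF

/-- The inclusion of the base. -/
def jj (p : I × I) : ℝ × ℝ := Prod.map Subtype.val Subtype.val p

/-- The inclusion of the phase space. -/
def iota (q : X) : (ℝ × ℝ) × ℝ := Prod.map jj id q

lemma emb_jj : MeasurableEmbedding jj :=
  (MeasurableEmbedding.subtype_coe measurableSet_Iset).prodMap
    (MeasurableEmbedding.subtype_coe measurableSet_Iset)

lemma emb_iota : MeasurableEmbedding iota := emb_jj.prodMap MeasurableEmbedding.id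

lemma Dset_eq : Dset = Iset ×ˢ Iset := by
  ext p
  simp only [Dset, Iset, mem_prod, mem_ofPred_eq]
  tauto

lemma map_jj_vol : Measure.map jj volume = volume.restrict Dset := by
  have h : Measure.map (Subtype.val : I → ℝ) volume = volume.restrict Iset :=
    map_comap_subtype_coe measurableSet_Iset volume
  rw [Dset_eq, Measure.volume_eq_prod, Measure.volume_eq_prod, ← Measure.prod_restrict, ← h]
  exact (Measure.map_prod_map _ _ measurable_subtype_coe measurable_subtype_coe).symm

lemma map_jj_muD : Measure.map jj muD = mu2 := by
  ext S hS
  rw [Measure.map_apply emb_jj.measurable hS, muD, mu2, withDensity_apply _ (emb_jj.measurable hS),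
    withDensity_apply _ hS, ← map_jj_vol, setLIntegral_map hS (by fun_prop) emb_jj.measurable]
  rfl

lemma map_iota_muX : Measure.map iota muX = mu2.prod volume := by
  have h := Measure.map_prod_map muD (volume : Measure ℝ) emb_jj.measurable measurable_id
  rw [Measure.map_id, map_jj_muD] at h
  rw [h]; rfl

lemma roof_jj (p : I × I) : roof (jj p) = -Real.log (br (dig p.2) p.1) := by
  have h := sum_eq p.1 p.2
  rw [dig_floor] at h
  change Real.log ((⌊1 / (p.2 : ℝ)⌋ : ℝ) + p.1) = _
  rw [h, one_div, Real.log_inv]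

lemma roof_pos (p : I × I) : 0 < roof (jj p) := by
  rw [roof_jj]; linarith [log_I_neg (br (dig p.2) p.1)]

lemma integral_roof : ENNReal.ofReal (∫ p, roof p ∂mu2) = muX E := by
  rw [← map_jj_muD, emb_jj.integral_map]
  simp only [roof_jj]
  rw [integral_eq_lintegral_of_nonneg_ae
    (ae_of_all _ fun p => by have := roof_pos p; rw [roof_jj] at this; exact this.le)
    measurable_nlb.aestronglyMeasurable, ← muX_E, ENNReal.ofReal_toReal muX_E_lt_top.ne]

lemma iota_DPhi : iota ⁻¹' DPhi = E := by
  ext ⟨p, s⟩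
  change (jj p ∈ Dset ∧ 0 ≤ s ∧ s < roof (jj p)) ↔ (0 ≤ s ∧ s + Real.log (br (dig p.2) p.1) < 0)
  rw [roof_jj, Dset_eq]
  have : jj p ∈ Iset ×ˢ Iset := ⟨p.1.2, p.2.2⟩
  constructor
  · rintro ⟨-, h1, h2⟩; exact ⟨h1, by linarith⟩
  · rintro ⟨h1, h2⟩; exact ⟨this, h1, by linarith⟩

lemma mu3_eq : mu3 = Measure.map iota nu := by
  rw [mu3, integral_roof, ← map_iota_muX, emb_iota.restrict_map, iota_DPhi, nu, Measure.map_smul]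

lemma mu3_apply (S : Set ((ℝ × ℝ) × ℝ)) : mu3 S = nu (iota ⁻¹' S) := by
  rw [mu3_eq, emb_iota.map_apply]

lemma Ghat_jj (p : I × I) : GhatMap (jj p) = jj (Gh p) := by
  have h := sum_eq p.1 p.2
  rw [dig_floor] at h
  change (1 / ((⌊1 / (p.2 : ℝ)⌋ : ℝ) + p.1), Int.fract (1 / (p.2 : ℝ))) = _
  rw [h, one_div_one_div]
  rfl

lemma Ghat_iter (p : I × I) (n : ℕ) : GhatMap^[n] (jj p) = jj (Gh^[n] p) := by
  induction n with
  | zero => rfl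
  | succ n ih => rw [Function.iterate_succ_apply', ih, Ghat_jj, Function.iterate_succ_apply']

lemma R_pow (p : I × I) (s : ℝ) (n : ℕ) : (R ^ n) (p, s) = (Gh^[n] p, s - birk (jj p) n) := by
  induction n with
  | zero => simp [birk]
  | succ n ih =>
    rw [pow_succ', Equiv.Perm.mul_apply, ih, Function.iterate_succ_apply',
      show birk (jj p) (n + 1) = birk (jj p) n + roof (GhatMap^[n] (jj p)) from
        Finset.sum_range_succ _ _, Ghat_iter, roof_jj]
    refine Prod.ext rfl ?_
    change s - birk (jj p) n + Real.log (br (dig (Gh^[n] p).2) (Gh^[n] p).1) = _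
    ring

lemma birk_mono (p : I × I) : Monotone (birk (jj p)) := by
  refine monotone_nat_of_le_succ fun n => ?_
  rw [birk, birk, Finset.sum_range_succ, Ghat_iter]
  linarith [roof_pos (Gh^[n] p)]

lemma height_pow_le (q : X) (n : ℕ) : ((R ^ n) q).2 ≤ q.2 := by
  induction n with
  | zero => simp
  | succ n ih =>
    rw [pow_succ', Equiv.Perm.mul_apply]
    exact (height_R _).le.trans ih

lemma pr_up {q : X} (h : 0 ≤ q.2) : ∃ n : ℕ, (R ^ n) q ∈ E := by
  obtain ⟨n, hn⟩ := red_exists fundE q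
  have hm := red_mem fundE q
  rw [hn] at hm
  cases n with
  | ofNat n => exact ⟨n, by simpa using hm⟩
  | negSucc m =>
    exfalso
    have h1 : q = (R ^ m) (R ((R ^ (Int.negSucc m)) q)) := by
      rw [← Equiv.Perm.mul_apply (R ^ m) R, ← pow_succ, zpow_negSucc, ← Equiv.Perm.mul_apply,
        mul_inv_cancel, Equiv.Perm.one_apply]
    have h2 := height_pow_le (R ((R ^ (Int.negSucc m)) q)) m
    rw [← h1] at h2
    linarith [hm.2]

lemma flow_iota {t : ℝ} (ht : 0 ≤ t) {q : X} (hq : q ∈ E) :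
    flowMap t (iota q) = iota (Phi t q) := by
  obtain ⟨p, s⟩ := q
  have hs : 0 ≤ s := hq.1
  obtain ⟨n, hn⟩ := pr_up (q := T t (p, s)) (by change 0 ≤ s + t; linarith)
  have hred := red_eq fundE (q := T t (p, s)) (n := n) (by simpa using hn)
  have e1 : (R ^ n) (T t (p, s)) = (Gh^[n] p, s + t - birk (jj p) n) := R_pow p (s + t) n
  have e2 : R ((R ^ n) (T t (p, s))) = (Gh^[n + 1] p, s + t - birk (jj p) (n + 1)) := by
    rw [← Equiv.Perm.mul_apply, ← pow_succ']
    exact R_pow p (s + t) (n + 1)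
  have h1 := hn.1
  have h2 := hn.2
  rw [e2] at h2
  rw [e1] at h1
  simp only at h1 h2
  have hr : rTime (jj p) (s + t) = n + 1 := by
    refine IsLeast.csInf_eq ⟨?_, ?_⟩
    · change s + t < birk (jj p) (n + 1)
      linarith
    · intro m hm
      have hm : s + t < birk (jj p) m := hm
      by_contra hlt
      have := birk_mono p (by omega : m ≤ n)
      linarith
  change (GhatMap^[rTime (jj p) (s + t) - 1] (jj p),
    s + t - birk (jj p) (rTime (jj p) (s + t) - 1)) = _
  rw [hr, Nat.add_sub_cancel, Ghat_iter, Phi, pr, hred, zpow_natCast, e1]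
  rfl

end SF

/-- The special flow `{Φ_t}` built over the natural extension `Ĝ` of the
Gauss map with roof function `φ(x,y) = ln(⌊1/y⌋ + x)` is mixing: for all measurable
`A, B ⊆ D_Φ`, `μ₃(Φ_t⁻¹(A) ∩ B) → μ₃(A)·μ₃(B)` as `t → +∞`. -/
theorem statement17 (A B : Set ((ℝ × ℝ) × ℝ)) (hA : MeasurableSet A) (hB : MeasurableSet B)
    (hA' : A ⊆ DPhi) (hB' : B ⊆ DPhi) :
    Filter.Tendsto (fun t : ℝ => mu3 (flowMap t ⁻¹' A ∩ B)) Filter.atTop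
      (nhds (mu3 A * mu3 B)) := by
  have h := SF.mixing_sets (SF.emb_iota.measurable hA) (SF.emb_iota.measurable hB)
  rw [SF.mu3_apply A, SF.mu3_apply B]
  refine h.congr' ?_
  filter_upwards [eventually_ge_atTop 0] with t ht
  rw [SF.mu3_apply]
  congr 1
  ext q
  simp only [mem_inter_iff, mem_preimage]
  refine and_congr_left fun hq => ?_
  have hE : q ∈ SF.E := by
    rw [← SF.iota_DPhi]
    exact hB' hq
  rw [SF.flow_iota ht hE]
end
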